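/- arXiv:0709.4518 — 2 statements merged into one kernel-verified Lean document; each statement's English description precedes it below -/
import Mathlib

section
/- Let I be a homogeneous ideal of S = K[x_1,…,x_n], K an infinite field, and let in(I) be the initial ideal of I with respect to the degree reverse lexicographic order induced by x_1 > ⋯ > x_n. If S/in(I) has the strong Lefschetz property, then S/I has the strong Lefschetz property. -/
/-! Combinatorics of simplicial complexes on subsets of ℕ (vertex set `[n] = Finset.Icc 1 n`). -/

/-- `Γ` is a simplicial complex on the vertex set `V`. -/
def SimplicialComplexOn (V : Finset ℕ) (Γ : Set (Finset ℕ)) : Prop :=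
  (∀ F ∈ Γ, F ⊆ V) ∧ (∀ v ∈ V, ({v} : Finset ℕ) ∈ Γ) ∧
    (∀ F ∈ Γ, ∀ G, G ⊆ F → G ∈ Γ)

/-- The dimension of a simplicial complex, as an integer (`dim Γ = max {|F| - 1 : F ∈ Γ}`). -/
noncomputable def sdim (Γ : Set (Finset ℕ)) : ℤ :=
  sSup ((fun F : Finset ℕ => (F.card : ℤ) - 1) '' Γ)

/-- A facet of `Γ` is a maximal face. -/
def IsFacet (Γ : Set (Finset ℕ)) (F : Finset ℕ) : Prop :=
  F ∈ Γ ∧ ∀ G ∈ Γ, F ⊆ G → F = G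

/-- A complex is pure if all of its facets have the same cardinality. -/
def PureComplex (Γ : Set (Finset ℕ)) : Prop :=
  ∀ F G, IsFacet Γ F → IsFacet Γ G → F.card = G.card

/-- `fvec Γ k` is the number of faces of `Γ` of cardinality `k`, i.e. `f_{k-1}(Γ)`. -/
noncomputable def fvec (Γ : Set (Finset ℕ)) (k : ℕ) : ℕ :=
  {F ∈ Γ | F.card = k}.ncard

/-- The `h`-vector of a `(d-1)`-dimensional complex:
`h_i = ∑_{j=0}^i (-1)^{i-j} binom(d-j, d-i) f_{j-1}`. -/
noncomputable def hvec (d : ℕ) (Γ : Set (Finset ℕ)) (i : ℕ) : ℤ :=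
  ∑ j ∈ Finset.range (i + 1),
    (-1 : ℤ) ^ (i - j) * (Nat.choose (d - j) (d - i) : ℤ) * (fvec Γ j : ℤ)

/-- The link of `Γ` with respect to a face `F`. -/
def linkOf (Γ : Set (Finset ℕ)) (F : Finset ℕ) : Set (Finset ℕ) :=
  {G | Disjoint G F ∧ G ∪ F ∈ Γ}

/-- The contraction of `Γ` with respect to `{i,j}`, identifying vertex `i` with `j`. -/
def contraction (Γ : Set (Finset ℕ)) (i j : ℕ) : Set (Finset ℕ) :=
  {F | F ∈ Γ ∧ i ∉ F} ∪ {G | ∃ F ∈ Γ, i ∈ F ∧ G = F.erase i ∪ {j}}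

/-- The Link condition: `lk_Γ({i}) ∩ lk_Γ({j}) = lk_Γ({i,j})`. -/
def LinkCondition (Γ : Set (Finset ℕ)) (i j : ℕ) : Prop :=
  linkOf Γ {i} ∩ linkOf Γ {j} = linkOf Γ {i, j}

open Classical in
/-- The shift operator `C_{ij}` on faces. -/
noncomputable def shiftMap (Γ : Set (Finset ℕ)) (i j : ℕ) (F : Finset ℕ) : Finset ℕ :=
  if i ∈ F ∧ j ∉ F ∧ F.erase i ∪ {j} ∉ Γ then F.erase i ∪ {j} else F

/-- `Shift_{ij}(Γ) = {C_{ij}(F) : F ∈ Γ}`. -/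
noncomputable def shiftComplex (Γ : Set (Finset ℕ)) (i j : ℕ) : Set (Finset ℕ) :=
  (shiftMap Γ i j) '' Γ

/-- The join `W * Σ = {F ∪ G : F ⊆ W, G ∈ Σ}` of a vertex set with a complex. -/
def joinW (W : Finset ℕ) (C : Set (Finset ℕ)) : Set (Finset ℕ) :=
  {H | ∃ F ⊆ W, ∃ G ∈ C, H = F ∪ G}

/-- Strong edge decomposability: boundaries of simplices and `{∅}` are strongly edge
decomposable, and recursively, a pure complex satisfying the Link condition w.r.t. an edge
`{i,j}` whose contraction and link are strongly edge decomposable is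
strongly edge decomposable. -/
inductive StronglyEdgeDecomposable : Set (Finset ℕ) → Prop
  | trivialComplex : StronglyEdgeDecomposable {(∅ : Finset ℕ)}
  | simplexBoundary (V : Finset ℕ) (hV : V.Nonempty) :
      StronglyEdgeDecomposable {F | F ⊆ V ∧ F ≠ V}
  | contract (Γ : Set (Finset ℕ)) (i j : ℕ) (hij : i < j)
      (hpure : PureComplex Γ) (hedge : ({i, j} : Finset ℕ) ∈ Γ)
      (hlc : LinkCondition Γ i j)
      (hcon : StronglyEdgeDecomposable (contraction Γ i j))
      (hlk : StronglyEdgeDecomposable (linkOf Γ {i, j})) :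
      StronglyEdgeDecomposable Γ

/-- A shifted complex: `F ∈ Γ`, `i ∈ F`, `i < j`, `j ∈ V` imply `(F \ {i}) ∪ {j} ∈ Γ`. -/
def ShiftedComplex (V : Finset ℕ) (Γ : Set (Finset ℕ)) : Prop :=
  ∀ F ∈ Γ, ∀ i ∈ F, ∀ j, i < j → j ∈ V → insert j (F.erase i) ∈ Γ

/-- A `d`-subset `F ⊆ [n]` is admissible if `n - k ∉ F` implies `[n-d+k, n-k-1] ⊆ F`. -/
def Admissible (n d : ℕ) (F : Finset ℕ) : Prop :=
  F ⊆ Finset.Icc 1 n ∧ F.card = d ∧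
    ∀ k < n, (n - k) ∉ F → Finset.Icc (n - d + k) (n - k - 1) ⊆ F

/-- `Δ(n,d)`, the complex generated by all admissible `d`-subsets of `[n]`; by a theorem of
Kalai this is the symmetric algebraic shifted complex `Δˢ(C(n,d))` of the boundary complex of
the cyclic `d`-polytope with `n` vertices. -/
def DeltaC (n d : ℕ) : Set (Finset ℕ) :=
  if d = 0 then {(∅ : Finset ℕ)} else {G | ∃ F, Admissible n d F ∧ G ⊆ F}

/-- The increasing enumeration of `V`, as a map `{1, …, |V|} → V ⊆ ℕ` (identity elsewhere). -/
noncomputable def vlabel (V : Finset ℕ) (i : ℕ) : ℕ :=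
  if h : i - 1 < V.card then (((V.orderIsoOfFin rfl) ⟨i - 1, h⟩ : V) : ℕ) else i

/-- `Δ(V,d)`: the complex `Δ(|V|,d)` relabeled order-isomorphically onto the vertex set `V`. -/
noncomputable def DeltaV (V : Finset ℕ) (d : ℕ) : Set (Finset ℕ) :=
  (fun G : Finset ℕ => G.image (vlabel V)) '' DeltaC V.card d
/-! Squeezed balls and spheres (Kalai). Monomials on `[m]` are represented as multisets. -/

/-- `U` is a shifted order ideal of monomials on `[m]`: it contains `1` and all variables
`x_1,…,x_m`, is closed under divisibility, and `u·x_i ∈ U`, `i < j ≤ m` imply `u·x_j ∈ U`.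
(A monomial is encoded as the multiset of its variable indices.) -/
def IsShiftedOrderIdeal (m : ℕ) (U : Set (Multiset ℕ)) : Prop :=
  (∀ u ∈ U, ∀ i ∈ u, i ∈ Finset.Icc 1 m) ∧ (0 : Multiset ℕ) ∈ U ∧
    (∀ i ∈ Finset.Icc 1 m, ({i} : Multiset ℕ) ∈ U) ∧
    (∀ u ∈ U, ∀ v, v ≤ u → v ∈ U) ∧
    (∀ u : Multiset ℕ, ∀ i j : ℕ, i < j → j ≤ m → (i ::ₘ u) ∈ U → (j ::ₘ u) ∈ U)

/-- For a monomial `u = x_{i_1}⋯x_{i_k}` (`i_1 ≤ … ≤ i_k`), the `(d+1)`-set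
`F_d(u) = {i_1, i_1+1} ∪ {i_2+2, i_2+3} ∪ ⋯ ∪ {i_k+2(k-1), i_k+2k-1} ∪ [n+2k-d, n]`. -/
noncomputable def Fd (n d : ℕ) (u : Multiset ℕ) : Finset ℕ :=
  (Finset.range (Multiset.card u)).biUnion
      (fun j => {(u.sort (· ≤ ·)).getD j 0 + 2 * j, (u.sort (· ≤ ·)).getD j 0 + 2 * j + 1}) ∪
    Finset.Icc (n + 2 * Multiset.card u - d) n

/-- The squeezed `d`-ball `B_d(U)`: the complex generated by `{F_d(u) : u ∈ U}`. -/
def squeezedBall (n d : ℕ) (U : Set (Multiset ℕ)) : Set (Finset ℕ) :=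
  {G | ∃ u ∈ U, G ⊆ Fd n d u}

/-- The boundary of a pure `d`-dimensional complex `B`: the subcomplex generated by the
`(d-1)`-dimensional faces (cardinality-`d` faces) contained in exactly one facet. -/
noncomputable def complexBoundary (d : ℕ) (B : Set (Finset ℕ)) : Set (Finset ℕ) :=
  {F | ∃ G, F ⊆ G ∧ G ∈ B ∧ G.card = d ∧
    {H | H ∈ B ∧ H.card = d + 1 ∧ G ⊆ H}.ncard = 1}

/-- The squeezed `(d-1)`-sphere `S_d(U) = ∂ B_d(U)`. -/
noncomputable def squeezedSphere (n d : ℕ) (U : Set (Multiset ℕ)) : Set (Finset ℕ) :=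
  complexBoundary d (squeezedBall n d U)

/-! The Stanley–Reisner ideal, the degree reverse lexicographic order, initial ideals and
generic initial ideals in the polynomial ring `K[x_1,…,x_n]`, realized as
`MvPolynomial (Fin n) K` with the variable `x_i` being `X ⟨i-1⟩`. -/

/-- The squarefree monomial `x_F = ∏_{i ∈ F} x_i` (variable `x_i`, `1 ≤ i ≤ n`, is `X ⟨i-1⟩`). -/
noncomputable def faceMonomial (K : Type*) [CommRing K] (n : ℕ) (F : Finset ℕ) :
    MvPolynomial (Fin n) K :=
  ∏ a ∈ Finset.univ.filter (fun a : Fin n => (a : ℕ) + 1 ∈ F), MvPolynomial.X a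

/-- The Stanley–Reisner ideal of a complex `Γ` on `[n]`, generated by the squarefree
monomials `x_F` with `F ⊆ [n]`, `F ∉ Γ`. -/
noncomputable def srIdeal (K : Type*) [CommRing K] (n : ℕ) (Γ : Set (Finset ℕ)) :
    Ideal (MvPolynomial (Fin n) K) :=
  Ideal.span {f | ∃ F : Finset ℕ, F ⊆ Finset.Icc 1 n ∧ F ∉ Γ ∧ f = faceMonomial K n F}

/-- The degree reverse lexicographic order (induced by `x_1 > x_2 > ⋯`, smaller index =
bigger variable): `u < v` iff `deg u < deg v`, or degrees agree and at the largest index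
where `u, v` differ, `u` has the larger exponent. -/
def DegRevLexLT {σ : Type*} [LinearOrder σ] (u v : σ →₀ ℕ) : Prop :=
  (u.sum fun _ e => e) < (v.sum fun _ e => e) ∨
    ((u.sum fun _ e => e) = (v.sum fun _ e => e) ∧
      ∃ k, v k < u k ∧ ∀ l, k < l → u l = v l)

/-- The initial ideal of `I` w.r.t. the degree reverse lexicographic order: the ideal
spanned by the leading monomials of the elements of `I`. -/
noncomputable def initialIdeal {σ : Type*} [LinearOrder σ] {K : Type*} [Field K]
    (I : Ideal (MvPolynomial σ K)) : Ideal (MvPolynomial σ K) :=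
  Ideal.span {m | ∃ f ∈ I, ∃ u ∈ f.support, m = MvPolynomial.monomial u (1 : K) ∧
    ∀ v ∈ f.support, v ≠ u → DegRevLexLT v u}

/-- The linear change of coordinates of `K[x_1,…,x_n]` associated with a matrix `M`,
`x_j ↦ ∑_i M_{ij} x_i`. -/
noncomputable def genLin {K : Type*} [CommRing K] {n : ℕ} (M : Matrix (Fin n) (Fin n) K) :
    MvPolynomial (Fin n) K →ₐ[K] MvPolynomial (Fin n) K :=
  MvPolynomial.aeval (fun j => ∑ a : Fin n, MvPolynomial.C (M a j) * MvPolynomial.X a)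

/-- `J` is the generic initial ideal (w.r.t. degrevlex) of `I`: there is a nonempty Zariski
open subset `U ⊆ GL_n(K)` (the nonvanishing locus of a nonzero polynomial in the matrix
entries) such that `in(φ(I)) = J` for every `φ ∈ U`. -/
def IsGin {K : Type*} [Field K] {n : ℕ} (I J : Ideal (MvPolynomial (Fin n) K)) : Prop :=
  ∃ p : MvPolynomial (Fin n × Fin n) K, p ≠ 0 ∧
    ∀ M : Matrix (Fin n) (Fin n) K, IsUnit M.det →
      MvPolynomial.eval (fun q => M q.1 q.2) p ≠ 0 →
      initialIdeal (Ideal.map (genLin M) I) = J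

/-- The set `G(J)` of (exponent vectors of) minimal monomial generators of a monomial
ideal `J`. -/
def minimalMonomialGens {σ : Type*} {K : Type*} [Field K] (J : Ideal (MvPolynomial σ K)) :
    Set (σ →₀ ℕ) :=
  {u | MvPolynomial.monomial u (1 : K) ∈ J ∧
    ∀ v : σ →₀ ℕ, v ≤ u → MvPolynomial.monomial v (1 : K) ∈ J → v = u}

/-- The squarefree operation `Φ` on exponent vectors:
`x_{i_1} x_{i_2} ⋯ x_{i_k} ↦ {i_1, i_2+1, …, i_k+k-1}` (`i_1 ≤ i_2 ≤ ⋯ ≤ i_k`). -/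
noncomputable def sqfreeOp {n : ℕ} (u : Fin n →₀ ℕ) : Finset ℕ :=
  (List.zipWith (· + ·)
      ((u.toMultiset.map (fun a : Fin n => (a : ℕ) + 1)).sort (· ≤ ·))
      (List.range (Multiset.card (u.toMultiset)))).toFinset

/-- `Δs` is the symmetric algebraic shifted complex of `Γ`: its Stanley–Reisner ideal is
`Φ(Gin(I_Γ))`, i.e. `Δs` consists of the `F ⊆ [n]` containing no `Φ(u)`, `u ∈ G(Gin(I_Γ))`. -/
def IsSymmetricShift (K : Type*) [Field K] (n : ℕ) (Γ Δs : Set (Finset ℕ)) : Prop :=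
  ∃ J : Ideal (MvPolynomial (Fin n) K), IsGin (srIdeal K n Γ) J ∧
    Δs = {F | F ⊆ Finset.Icc 1 n ∧ ∀ u ∈ minimalMonomialGens J, ¬ sqfreeOp u ⊆ F}

/-- The exponent vector (in `K[x_1,…,x_n]`) of a monomial given as a multiset. -/
noncomputable def multisetToExp (n : ℕ) (u : Multiset ℕ) : Fin n →₀ ℕ :=
  Finsupp.equivFunOnFinite.symm (fun a : Fin n => u.count ((a : ℕ) + 1))
/-! The exterior algebra `E = ⋀⟨e_1, e_2, …⟩` over `K`, exterior face ideals, the reverse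
lexicographic order, initial ideals and exterior algebraic shifting. We realize `E` as the
exterior algebra of the `K`-module `ℕ → K`, with `e_i` the image of `Pi.single i 1`. -/

/-- The exterior algebra `⋀ (ℕ → K)` hosting all the exterior face ideals. -/
abbrev ExtAlg (K : Type*) [Field K] := ExteriorAlgebra K (ℕ → K)

/-- The exterior monomial `e_F = e_{i_1} ∧ ⋯ ∧ e_{i_k}` for `F = {i_1 < ⋯ < i_k}`. -/
noncomputable def eMon (K : Type*) [Field K] (F : Finset ℕ) : ExtAlg K :=
  ((F.sort (· ≤ ·)).map (fun i => ExteriorAlgebra.ι K (Pi.single i (1 : K)))).prod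

/-- The exterior face ideal `J_Γ` of a complex `Γ` on the vertex set `V`, generated by the
monomials `e_F` with `F ⊆ V`, `F ∉ Γ`. -/
noncomputable def extFaceIdeal (K : Type*) [Field K] (V : Finset ℕ) (Γ : Set (Finset ℕ)) :
    Ideal (ExtAlg K) :=
  Ideal.span {x | ∃ F : Finset ℕ, F ⊆ V ∧ F ∉ Γ ∧ x = eMon K F}

/-- The alternating form computing the determinant of the coordinates indexed by `F`. -/
noncomputable def detCoeffAlt (K : Type*) [Field K] (F : Finset ℕ) :
    (ℕ → K) [⋀^Fin F.card]→ₗ[K] K :=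
  (Matrix.detRowAlternating).compLinearMap
    (LinearMap.funLeft K K (fun b : Fin F.card => ((F.orderIsoOfFin rfl b : F) : ℕ)))

/-- The coefficient functional of the basis monomial `e_F`: the linear functional on the
exterior algebra giving the coefficient of `e_F` in the monomial basis expansion. -/
noncomputable def extCoeff (K : Type*) [Field K] (F : Finset ℕ) : ExtAlg K →ₗ[K] K :=
  ExteriorAlgebra.liftAlternating
    (fun i => if h : i = F.card then (detCoeffAlt K F).domDomCongr (finCongr h.symm) else 0)

/-- The reverse lexicographic order (induced by `1 > 2 > ⋯`) on exterior monomials: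
`F < G` iff `|F| < |G|`, or the cardinalities agree and the largest element of the
symmetric difference `F Δ G` belongs to `F`. -/
def RevLexLT (F G : Finset ℕ) : Prop :=
  F.card < G.card ∨ (F.card = G.card ∧
    ∃ k, k ∈ F ∧ k ∉ G ∧ ∀ l, k < l → (l ∈ F ↔ l ∈ G))

/-- The initial ideal of an ideal `I` of the exterior algebra w.r.t. the reverse
lexicographic order: spanned by the leading monomials `e_F` of the elements of `I`. -/
noncomputable def extInitialIdeal (K : Type*) [Field K] (I : Ideal (ExtAlg K)) :
    Ideal (ExtAlg K) :=
  Ideal.span {x | ∃ y ∈ I, ∃ F : Finset ℕ, x = eMon K F ∧ extCoeff K F y ≠ 0 ∧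
    ∀ G : Finset ℕ, extCoeff K G y ≠ 0 → G ≠ F → RevLexLT G F}

/-- The linear change of coordinates of `span{e_i : i ∈ V}` (identity elsewhere)
associated with a `|V| × |V|` matrix `M`. -/
noncomputable def extLinMap (K : Type*) [Field K] (V : Finset ℕ)
    (M : Matrix (Fin V.card) (Fin V.card) K) : (ℕ → K) →ₗ[K] (ℕ → K) where
  toFun v k :=
    if h : k ∈ V then
      ∑ a : Fin V.card,
        M ((V.orderIsoOfFin rfl).symm ⟨k, h⟩) a * v ((V.orderIsoOfFin rfl a : V) : ℕ)
    else v k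
  map_add' x y := by
    funext k
    by_cases h : k ∈ V <;> simp [h, mul_add, Finset.sum_add_distrib]
  map_smul' c x := by
    funext k
    by_cases h : k ∈ V <;> simp [h, Finset.mul_sum, mul_left_comm]

/-- The algebra automorphism of the exterior algebra induced by `extLinMap`. -/
noncomputable def extAlgMap (K : Type*) [Field K] (V : Finset ℕ)
    (M : Matrix (Fin V.card) (Fin V.card) K) : ExtAlg K →ₐ[K] ExtAlg K :=
  ExteriorAlgebra.lift K ⟨(ExteriorAlgebra.ι K).comp (extLinMap K V M),
    fun _ => ExteriorAlgebra.ι_sq_zero _⟩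

/-- `Δe` is the exterior algebraic shifted complex of `Γ` (as complexes on the vertex set
`V`): `J_{Δe} = Gin(J_Γ)`, where the generic initial ideal is witnessed by a nonempty
Zariski open subset of `GL(V)` (the nonvanishing locus of a nonzero polynomial in the
matrix entries). -/
def IsExteriorShift (K : Type*) [Field K] (V : Finset ℕ) (Γ Δe : Set (Finset ℕ)) : Prop :=
  ∃ p : MvPolynomial (Fin V.card × Fin V.card) K, p ≠ 0 ∧
    ∀ M : Matrix (Fin V.card) (Fin V.card) K, IsUnit M.det →
      MvPolynomial.eval (fun q => M q.1 q.2) p ≠ 0 →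
      extInitialIdeal K (Ideal.map (extAlgMap K V M) (extFaceIdeal K V Γ)) =
        extFaceIdeal K V Δe

/-- The simplicial complex on `V` whose exterior face ideal is the (monomial) ideal `J`. -/
noncomputable def complexOfExtIdeal (K : Type*) [Field K] (V : Finset ℕ)
    (J : Ideal (ExtAlg K)) : Set (Finset ℕ) :=
  {F | F ⊆ V ∧ eMon K F ∉ J}

/-- Nongeneric exterior shifting `Δ_φ(Γ)`, defined by `J_{Δ_φ(Γ)} = in(φ(J_Γ))` for an
individual linear change of coordinates `φ` given by the matrix `M`. -/
noncomputable def DeltaPhi (K : Type*) [Field K] (V : Finset ℕ)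
    (M : Matrix (Fin V.card) (Fin V.card) K) (Γ : Set (Finset ℕ)) : Set (Finset ℕ) :=
  complexOfExtIdeal K V (extInitialIdeal K (Ideal.map (extAlgMap K V M) (extFaceIdeal K V Γ)))

/-- The shifting-theoretic upper bound relation for a `(d-1)`-dimensional complex `Γ` on the
vertex set `V`: `Δᵉ(Γ) ⊆ Δ(V,d)`. -/
def ShiftingUBR (K : Type*) [Field K] (V : Finset ℕ) (d : ℕ) (Γ : Set (Finset ℕ)) : Prop :=
  ∀ Δe, IsExteriorShift K V Γ Δe → Δe ⊆ DeltaV V d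
/-! Graded pieces, linear systems of parameters, the Cohen–Macaulay property and the strong
Lefschetz property for graded quotients `A = K[x_1,…,x_n]/I`. -/

/-- The degree-`k` homogeneous component of the graded quotient `S/I` (the image of the
degree-`k` homogeneous polynomials). -/
noncomputable def quotPiece {K : Type*} [Field K] {n : ℕ}
    (I : Ideal (MvPolynomial (Fin n) K)) (k : ℕ) :
    Submodule K (MvPolynomial (Fin n) K ⧸ I) :=
  (MvPolynomial.homogeneousSubmodule (Fin n) K k).map (Ideal.Quotient.mkₐ K I).toLinearMap

/-- `θ_1, …, θ_d` is a linear system of parameters of `S/I`: the `θ_a` are linear forms and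
the quotient `S/(I + (θ_1,…,θ_d))` has Krull dimension `≤ 0`. -/
def IsLSOP {K : Type*} [Field K] {n : ℕ} (I : Ideal (MvPolynomial (Fin n) K)) (d : ℕ)
    (θ : Fin d → MvPolynomial (Fin n) K) : Prop :=
  (∀ a, (θ a).IsHomogeneous 1) ∧
    ringKrullDim (MvPolynomial (Fin n) K ⧸ (I ⊔ Ideal.span (Set.range θ))) ≤ 0

set_option synthInstance.maxHeartbeats 1000000 in
/-- The graded quotient `A = S/I` is Cohen–Macaulay: a linear system of parameters of
length `d = dim A` forms a regular `A`-sequence. -/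
def IsCMIdeal {K : Type*} [Field K] {n : ℕ} (I : Ideal (MvPolynomial (Fin n) K)) : Prop :=
  ∃ d : ℕ, ringKrullDim (MvPolynomial (Fin n) K ⧸ I) = d ∧
    ∃ θ : Fin d → MvPolynomial (Fin n) K, IsLSOP I d θ ∧
      RingTheory.Sequence.IsRegular (MvPolynomial (Fin n) K ⧸ I)
        ((List.ofFn θ).map (⇑(Ideal.Quotient.mk I)))

/-- The graded quotient `A = S/I` has the strong Lefschetz property: `A` is Cohen–Macaulay
and there are an l.s.o.p. `θ_1, …, θ_d` (`d = dim A`) and a linear form `ω` such that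
`ω^{s-2i} : (A/θA)_i → (A/θA)_{s-i}` is bijective for `0 ≤ i ≤ s/2`, where
`s = max{k : (A/θA)_k ≠ 0}`. -/
def HasSLPIdeal {K : Type*} [Field K] {n : ℕ} (I : Ideal (MvPolynomial (Fin n) K)) : Prop :=
  IsCMIdeal I ∧
    ∃ d : ℕ, ringKrullDim (MvPolynomial (Fin n) K ⧸ I) = d ∧
      ∃ θ : Fin d → MvPolynomial (Fin n) K, IsLSOP I d θ ∧
        ∃ ω : MvPolynomial (Fin n) K, ω.IsHomogeneous 1 ∧
          ∃ s : ℕ,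
            (quotPiece (I ⊔ Ideal.span (Set.range θ)) s ≠ ⊥ ∧
              ∀ k, s < k → quotPiece (I ⊔ Ideal.span (Set.range θ)) k = ⊥) ∧
            ∀ i : ℕ, 2 * i ≤ s →
              Set.BijOn
                (fun x => (Ideal.Quotient.mk (I ⊔ Ideal.span (Set.range θ)) ω) ^ (s - 2 * i) * x)
                (quotPiece (I ⊔ Ideal.span (Set.range θ)) i)
                (quotPiece (I ⊔ Ideal.span (Set.range θ)) (s - i))

/-- A simplicial complex is Cohen–Macaulay over `K` if its Stanley–Reisner ring is. -/
def ComplexCM (K : Type*) [Field K] (n : ℕ) (Γ : Set (Finset ℕ)) : Prop :=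
  IsCMIdeal (srIdeal K n Γ)

/-- A `(d-1)`-dimensional complex `Γ` has the strong Lefschetz property if `h_d(Γ) > 0` and
its Stanley–Reisner ring has the strong Lefschetz property. -/
def ComplexSLP (K : Type*) [Field K] (n d : ℕ) (Γ : Set (Finset ℕ)) : Prop :=
  0 < hvec d Γ d ∧ HasSLPIdeal (srIdeal K n Γ)

/-- A `1`-dimensional simplicial sphere (a cycle): a complex all of whose faces are edges or
smaller, every vertex lying in exactly two edges, whose edge graph is connected. -/
def IsCycleComplex (V : Finset ℕ) (Γ : Set (Finset ℕ)) : Prop :=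
  SimplicialComplexOn V Γ ∧ (∀ F ∈ Γ, F.card ≤ 2) ∧
    (∀ v ∈ V, {e | e ∈ Γ ∧ e.card = 2 ∧ v ∈ e}.ncard = 2) ∧
    ∀ u ∈ V, ∀ v ∈ V,
      Relation.ReflTransGen (fun a b : ℕ => ({a, b} : Finset ℕ) ∈ Γ) u v

/-!
For a regular sequence `θ` of `d` linear forms on `S/I` the Hilbert function of `S/I` is the
`d`-fold iterated partial sum of that of `S/(I, θ)`. For arbitrary linear forms it is at most that,
and equality characterizes regular sequences. Bijectivity of `ω^(s - 2i)` on `S/(I, θ)` likewise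
depends only on the Hilbert functions of `(I, θ)` and `(I, θ, ω^(s - 2i))`, so the strong Lefschetz
property is a statement about Hilbert functions.

For suitable weights, `in(I)` is in bounded degrees the limit at `t = 0` of the translates `t • I`
of `I` under a one-parameter torus. Ranks being semicontinuous, for all but finitely many `t` the
Hilbert functions of `(I, t⁻¹ • θ)` and `(I, t⁻¹ • θ, (t⁻¹ • ω)^m)` are at most those of
`(in(I), θ)` and `(in(I), θ, ω^m)`, while by Macaulay that of `I` is at least that of `in(I)`. If
`θ` is regular on `S/in(I)`, the partial sums force equality throughout, so `t⁻¹ • θ` and `t⁻¹ • ω`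
have the required properties for `S/I`.
-/

namespace GradedQuotient

open Module RingTheory.Sequence
open scoped Pointwise

section PartialSum

variable {M : Type*} [AddCommMonoid M]

/-- The sequence `k ↦ h 0 + ⋯ + h k` of partial sums of a sequence `h`. It relates the Hilbert
function of a graded module to that of its quotient by a regular linear form. -/
def partialSum (h : ℕ → M) (k : ℕ) : M := ∑ j ∈ Finset.range (k + 1), h j

theorem partialSum_zero (h : ℕ → M) : partialSum h 0 = h 0 :=
  Finset.sum_range_one h

theorem partialSum_succ (h : ℕ → M) (k : ℕ) :
    partialSum h (k + 1) = partialSum h k + h (k + 1) :=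
  Finset.sum_range_succ h (k + 1)

theorem partialSum_monotone [PartialOrder M] [IsOrderedAddMonoid M] :
    Monotone (partialSum : (ℕ → M) → ℕ → M) :=
  fun _ _ hgh _ => Finset.sum_le_sum fun j _ => hgh j

theorem partialSum_injective [IsLeftCancelAdd M] :
    Function.Injective (partialSum : (ℕ → M) → ℕ → M) := by
  intro g h hgh
  funext k
  cases k with
  | zero => rw [← partialSum_zero g, hgh, partialSum_zero]
  | succ k =>
    have hk := congrFun hgh (k + 1)
    rw [partialSum_succ, partialSum_succ, hgh] at hk
    exact add_left_cancel hk

end PartialSum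

section Regular

variable {A : Type*} [CommRing A] {I : Ideal A}

theorem mem_sup_span_singleton {x f : A} : f ∈ I ⊔ Ideal.span {x} ↔ ∃ g, f - x * g ∈ I := by
  rw [sup_comm, Ideal.mem_span_singleton_sup]
  constructor
  · rintro ⟨g, b, hb, rfl⟩
    exact ⟨g, by rwa [mul_comm x, add_sub_cancel_left]⟩
  · rintro ⟨g, hg⟩
    exact ⟨g, _, hg, by ring⟩

theorem isSMulRegular_quotient_iff {x : A} :
    IsSMulRegular (A ⧸ I) x ↔ ∀ f, x * f ∈ I → f ∈ I :=
  isSMulRegular_quotient_iff_mem_of_smul_mem I x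

theorem isWeaklyRegular_quotient_cons {x : A} {l : List A} :
    IsWeaklyRegular (A ⧸ I) (x :: l) ↔
      IsSMulRegular (A ⧸ I) x ∧ IsWeaklyRegular (A ⧸ I ⊔ Ideal.span {x}) l := by
  have hmap : x • (⊤ : Submodule A (A ⧸ I)) = Submodule.map I.mkQ (Ideal.span {x}) := by
    rw [← Submodule.ideal_span_singleton_smul, ← I.range_mkQ, ← Submodule.map_top,
      ← Submodule.map_smul'', smul_eq_mul, Ideal.mul_top]
  rw [isWeaklyRegular_cons_iff]
  exact and_congr_right fun _ => LinearEquiv.isWeaklyRegular_congr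
    ((Submodule.quotEquivOfEq _ _ hmap).trans (Submodule.quotientQuotientEquivQuotientSup _ _)) l

/-- For regular `x, y ∈ V`, the elements killed by `V` in `A ⧸ (I, x)` and in `A ⧸ (I, y)` are both
`Ext¹(A ⧸ (V), A ⧸ I)`. -/
theorem mem_sup_span_singleton_of_forall_mul_mem {V : Set A} {x y f : A} (hyV : y ∈ V)
    (hx : IsSMulRegular (A ⧸ I) x) (hy : IsSMulRegular (A ⧸ I) y)
    (hsoc : ∀ g, (∀ v ∈ V, v * g ∈ I ⊔ Ideal.span {y}) → g ∈ I ⊔ Ideal.span {y})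
    (hf : ∀ v ∈ V, v * f ∈ I ⊔ Ideal.span {x}) : f ∈ I ⊔ Ideal.span {x} := by
  rw [isSMulRegular_quotient_iff] at hx hy
  obtain ⟨g, hg⟩ := mem_sup_span_singleton.1 (hf y hyV)
  have hgy : g ∈ I ⊔ Ideal.span {y} := by
    refine hsoc g fun v hv => ?_
    obtain ⟨c, hc⟩ := mem_sup_span_singleton.1 (hf v hv)
    refine mem_sup_span_singleton.2 ⟨c, hx _ ?_⟩
    have hring : x * (v * g - y * c) = y * (v * f - x * c) - v * (y * f - x * g) := by ring
    rw [hring]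
    exact sub_mem (I.mul_mem_left _ hc) (I.mul_mem_left _ hg)
  obtain ⟨c, hc⟩ := mem_sup_span_singleton.1 hgy
  refine mem_sup_span_singleton.2 ⟨c, hy _ ?_⟩
  have hring : y * (f - x * c) = (y * f - x * g) + x * (g - y * c) := by ring
  rw [hring]
  exact add_mem hg (I.mul_mem_left _ hc)

end Regular

section Avoidance

variable {K A : Type*} [Field K] [Infinite K] [CommRing A] [IsNoetherianRing A] [Algebra K A]

theorem exists_isSMulRegular_of_forall_smul_eq_zero (V : Submodule K A) (M : Type*)
    [AddCommGroup M] [Module A M] [Module.Finite A M]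
    (hV : ∀ m : M, (∀ x ∈ V, x • m = 0) → m = 0) : ∃ x ∈ V, IsSMulRegular M x := by
  classical
  let trace (p : Ideal A) : Submodule K V := (p.restrictScalars K).comap V.subtype
  have hfin := associatedPrimes.finite A M
  have hproper : ∀ p ∈ associatedPrimes A M, trace p ≠ ⊤ := by
    intro p hp htop
    obtain ⟨hprime, m, rfl⟩ := isAssociatedPrime_iff.1 hp
    have hm : m = 0 := hV m fun x hx => by
      have hx' : (⟨x, hx⟩ : V) ∈ trace (Submodule.colon ⊥ {m}) := htop ▸ Submodule.mem_top
      simpa [trace, Submodule.mem_colon_singleton] using hx'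
    exact hprime.ne_top (by simp [hm])
  have hcover : (⊤ : Submodule K V) ∉ hfin.toFinset.image trace := by
    simpa using fun p hp => hproper p hp
  obtain ⟨x, hx⟩ := (Set.ne_univ_iff_exists_notMem _).1
    (Subspace.biUnion_ne_univ_of_top_notMem hcover)
  refine ⟨x, x.2, not_not.1 fun hreg => ?_⟩
  have hx' : (x : A) ∈ ⋃ p ∈ associatedPrimes A M, (p : Set A) := by
    rw [biUnion_associatedPrimes_eq_compl_regular]
    exact hreg
  obtain ⟨p, hp, hxp⟩ := Set.mem_iUnion₂.1 hx'
  exact hx (Set.mem_biUnion (Finset.mem_coe.2 (Finset.mem_image_of_mem _ (hfin.mem_toFinset.2 hp)))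
    hxp)

theorem exists_isSMulRegular_quotient_and (V : Submodule K A) {I J : Ideal A}
    (hI : ∀ f, (∀ x ∈ V, x * f ∈ I) → f ∈ I) (hJ : ∀ f, (∀ x ∈ V, x * f ∈ J) → f ∈ J) :
    ∃ x ∈ V, IsSMulRegular (A ⧸ I) x ∧ IsSMulRegular (A ⧸ J) x := by
  obtain ⟨x, hx, hreg⟩ :=
    exists_isSMulRegular_of_forall_smul_eq_zero V ((A ⧸ I) × (A ⧸ J)) (by
      rintro ⟨a, b⟩ hab
      obtain ⟨f, rfl⟩ := Ideal.Quotient.mk_surjective a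
      obtain ⟨g, rfl⟩ := Ideal.Quotient.mk_surjective b
      exact Prod.ext
        (Ideal.Quotient.eq_zero_iff_mem.2 <| hI f fun x hx =>
          Ideal.Quotient.eq_zero_iff_mem.1 (congrArg Prod.fst (hab x hx)))
        (Ideal.Quotient.eq_zero_iff_mem.2 <| hJ g fun x hx =>
          Ideal.Quotient.eq_zero_iff_mem.1 (congrArg Prod.snd (hab x hx))))
  exact ⟨x, hx, hreg.of_injective (LinearMap.inl A (A ⧸ I) (A ⧸ J)) LinearMap.inl_injective,
    hreg.of_injective (LinearMap.inr A (A ⧸ I) (A ⧸ J)) LinearMap.inr_injective⟩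

end Avoidance

theorem finrank_map_add_finrank_ker_inf {K V W : Type*} [Field K] [AddCommGroup V] [Module K V]
    [AddCommGroup W] [Module K W] (φ : V →ₗ[K] W) (U : Submodule K V) [FiniteDimensional K U] :
    finrank K (U.map φ) + finrank K (LinearMap.ker φ ⊓ U : Submodule K V) = finrank K U := by
  have h := LinearMap.finrank_range_add_finrank_ker (φ.domRestrict U)
  rw [LinearMap.range_domRestrict] at h
  rw [← h, LinearMap.ker_domRestrict, ← LinearEquiv.finrank_eq (Submodule.comapSubtypeEquivOfLe
    (inf_le_right : LinearMap.ker φ ⊓ U ≤ U)), Submodule.comap_inf, Submodule.comap_subtype_self,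
    inf_top_eq]

section Hilbert

variable {K A : Type*} [Field K] [CommRing A] [Algebra K A] (𝒜 : ℕ → Submodule K A)

/-- The degree `k` piece of `A ⧸ I`, where `A` is graded by `𝒜`. -/
def quotientPiece (I : Ideal A) (k : ℕ) : Submodule K (A ⧸ I) :=
  (𝒜 k).map (Ideal.Quotient.mkₐ K I).toLinearMap

/-- The degree `k` piece of an ideal `I`. -/
def idealPiece (I : Ideal A) (k : ℕ) : Submodule K A := I.restrictScalars K ⊓ 𝒜 k

/-- The Hilbert function `k ↦ dim_K (A ⧸ I)_k`. -/
noncomputable def hilbertFunction (I : Ideal A) (k : ℕ) : ℕ := finrank K (quotientPiece 𝒜 I k)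

/-- The degree `k` elements of `A ⧸ I` killed by `x`. -/
noncomputable def annihilatorPiece (I : Ideal A) (x : A) (k : ℕ) : Submodule K (A ⧸ I) :=
  LinearMap.ker (LinearMap.mulLeft K (Ideal.Quotient.mk I x)) ⊓ quotientPiece 𝒜 I k

variable {𝒜} {I : Ideal A} {k : ℕ}

theorem mem_quotientPiece {y : A ⧸ I} :
    y ∈ quotientPiece 𝒜 I k ↔ ∃ f ∈ 𝒜 k, Ideal.Quotient.mk I f = y :=
  Iff.rfl

theorem mem_annihilatorPiece {x : A} {y : A ⧸ I} :
    y ∈ annihilatorPiece 𝒜 I x k ↔ Ideal.Quotient.mk I x * y = 0 ∧ y ∈ quotientPiece 𝒜 I k :=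
  Iff.rfl

theorem quotientPiece_eq_bot_iff : quotientPiece 𝒜 I k = ⊥ ↔ ∀ f ∈ 𝒜 k, f ∈ I := by
  simp [Submodule.eq_bot_iff, mem_quotientPiece, Ideal.Quotient.eq_zero_iff_mem]

theorem map_factor_quotientPiece {J : Ideal A} (h : I ≤ J) :
    (quotientPiece 𝒜 I k).map (Ideal.Quotient.factorₐ K h).toLinearMap = quotientPiece 𝒜 J k := by
  rw [quotientPiece, ← Submodule.map_comp]
  rfl

section FiniteDimensional

variable [∀ k, FiniteDimensional K (𝒜 k)]

instance : FiniteDimensional K (quotientPiece 𝒜 I k) := by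
  unfold quotientPiece; infer_instance

instance : FiniteDimensional K (idealPiece 𝒜 I k) :=
  Submodule.finiteDimensional_of_le (inf_le_right : _ ≤ 𝒜 k)

instance {x : A} : FiniteDimensional K (annihilatorPiece 𝒜 I x k) :=
  Submodule.finiteDimensional_of_le (inf_le_right : _ ≤ quotientPiece 𝒜 I k)

theorem hilbertFunction_add_finrank_idealPiece (I : Ideal A) (k : ℕ) :
    hilbertFunction 𝒜 I k + finrank K (idealPiece 𝒜 I k) = finrank K (𝒜 k) := by
  rw [← finrank_map_add_finrank_ker_inf (Ideal.Quotient.mkₐ K I).toLinearMap (𝒜 k)]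
  have hker : LinearMap.ker (Ideal.Quotient.mkₐ K I).toLinearMap = I.restrictScalars K := by
    ext f
    simp [Ideal.Quotient.eq_zero_iff_mem]
  rw [hker]
  rfl

theorem hilbertFunction_eq_zero_iff_quotientPiece_eq_bot :
    hilbertFunction 𝒜 I k = 0 ↔ quotientPiece 𝒜 I k = ⊥ :=
  Submodule.finrank_eq_zero

theorem hilbertFunction_eq_zero_iff : hilbertFunction 𝒜 I k = 0 ↔ ∀ f ∈ 𝒜 k, f ∈ I :=
  hilbertFunction_eq_zero_iff_quotientPiece_eq_bot.trans quotientPiece_eq_bot_iff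

end FiniteDimensional

variable [GradedAlgebra 𝒜]

theorem map_mulLeft_quotientPiece (hI : I.IsHomogeneous 𝒜) {e : ℕ} {x : A} (hx : x ∈ 𝒜 e) :
    (quotientPiece 𝒜 I k).map (LinearMap.mulLeft K (Ideal.Quotient.mk I x)) =
      LinearMap.ker (Ideal.Quotient.factorₐ K
        (le_sup_left : I ≤ I ⊔ Ideal.span {x})).toLinearMap ⊓ quotientPiece 𝒜 I (e + k) := by
  ext y
  constructor
  · rintro ⟨_, ⟨f, hf, rfl⟩, rfl⟩
    refine ⟨?_, x * f, SetLike.mul_mem_graded hx hf, rfl⟩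
    exact Ideal.Quotient.eq_zero_iff_mem.2
      (Ideal.mul_mem_right _ _ (Ideal.mem_sup_right (Ideal.mem_span_singleton_self x)))
  · rintro ⟨hy, f, hf, rfl⟩
    obtain ⟨g, hg⟩ := mem_sup_span_singleton.1 (Ideal.Quotient.eq_zero_iff_mem.1 hy)
    refine ⟨_, ⟨DirectSum.decompose 𝒜 g k, SetLike.coe_mem _, rfl⟩, ?_⟩
    have hcomp := hI (e + k) hg
    rw [DirectSum.decompose_sub, DirectSum.sub_apply, Submodule.coe_sub,
      DirectSum.decompose_of_mem_same 𝒜 hf,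
      DirectSum.coe_decompose_mul_add_of_left_mem 𝒜 hx] at hcomp
    exact (Ideal.Quotient.eq.2 hcomp).symm

theorem isSMulRegular_quotient_iff_annihilatorPiece (hI : I.IsHomogeneous 𝒜) {e : ℕ} {x : A}
    (hx : x ∈ 𝒜 e) : IsSMulRegular (A ⧸ I) x ↔ ∀ k, annihilatorPiece 𝒜 I x k = ⊥ := by
  rw [isSMulRegular_quotient_iff]
  constructor
  · refine fun hreg k => (Submodule.eq_bot_iff _).2 ?_
    rintro _ ⟨hxf, f, -, rfl⟩
    exact Ideal.Quotient.eq_zero_iff_mem.2 (hreg f (Ideal.Quotient.eq_zero_iff_mem.1 hxf))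
  · refine fun hann f hf => (hI.mem_iff).2 fun k => ?_
    rw [← Ideal.Quotient.eq_zero_iff_mem, ← Submodule.mem_bot K, ← hann k, mem_annihilatorPiece]
    refine ⟨Ideal.Quotient.eq_zero_iff_mem.2 ?_, _, SetLike.coe_mem _, rfl⟩
    change x * (DirectSum.decompose 𝒜 f k : A) ∈ I
    rw [← DirectSum.coe_decompose_mul_add_of_left_mem 𝒜 hx]
    exact hI (e + k) hf

variable [∀ k, FiniteDimensional K (𝒜 k)]

/-- Additivity of dimension along the exact sequence
`0 → (0 : x)_k → (A ⧸ I)_k → (A ⧸ I)_{e + k} → (A ⧸ (I, x))_{e + k} → 0`. -/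
theorem hilbertFunction_add_finrank_annihilatorPiece (hI : I.IsHomogeneous 𝒜) {e : ℕ} {x : A}
    (hx : x ∈ 𝒜 e) (k : ℕ) :
    hilbertFunction 𝒜 I (e + k) + finrank K (annihilatorPiece 𝒜 I x k) =
      hilbertFunction 𝒜 I k + hilbertFunction 𝒜 (I ⊔ Ideal.span {x}) (e + k) := by
  have hmul := finrank_map_add_finrank_ker_inf
    (LinearMap.mulLeft K (Ideal.Quotient.mk I x)) (quotientPiece 𝒜 I k)
  have hfactor := finrank_map_add_finrank_ker_inf (Ideal.Quotient.factorₐ K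
    (le_sup_left : I ≤ I ⊔ Ideal.span {x})).toLinearMap (quotientPiece 𝒜 I (e + k))
  rw [map_mulLeft_quotientPiece hI hx] at hmul
  rw [map_factor_quotientPiece] at hfactor
  unfold hilbertFunction annihilatorPiece
  omega

theorem surjOn_mul_quotientPiece_iff (hI : I.IsHomogeneous 𝒜) {e : ℕ} {x : A} (hx : x ∈ 𝒜 e) :
    Set.SurjOn (fun y => Ideal.Quotient.mk I x * y) (quotientPiece 𝒜 I k)
        (quotientPiece 𝒜 I (e + k)) ↔
      hilbertFunction 𝒜 (I ⊔ Ideal.span {x}) (e + k) = 0 := by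
  rw [hilbertFunction, Submodule.finrank_eq_zero,
    ← map_factor_quotientPiece (le_sup_left : I ≤ I ⊔ Ideal.span {x}), ← le_bot_iff,
    Submodule.map_le_iff_le_comap]
  change quotientPiece 𝒜 I (e + k) ≤
    (quotientPiece 𝒜 I k).map (LinearMap.mulLeft K (Ideal.Quotient.mk I x)) ↔ _
  rw [map_mulLeft_quotientPiece hI hx, le_inf_iff, and_iff_left le_rfl]
  rfl

theorem bijOn_mul_quotientPiece_iff (hI : I.IsHomogeneous 𝒜) {e : ℕ} {x : A} (hx : x ∈ 𝒜 e) :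
    Set.BijOn (fun y => Ideal.Quotient.mk I x * y) (quotientPiece 𝒜 I k)
        (quotientPiece 𝒜 I (e + k)) ↔
      hilbertFunction 𝒜 I k = hilbertFunction 𝒜 I (e + k) ∧
        hilbertFunction 𝒜 (I ⊔ Ideal.span {x}) (e + k) = 0 := by
  have hmaps : Set.MapsTo (fun y => Ideal.Quotient.mk I x * y) (quotientPiece 𝒜 I k)
      (quotientPiece 𝒜 I (e + k)) := by
    rintro _ ⟨f, hf, rfl⟩
    exact ⟨x * f, SetLike.mul_mem_graded hx hf, rfl⟩
  have hinj : Set.InjOn (fun y => Ideal.Quotient.mk I x * y) (quotientPiece 𝒜 I k) ↔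
      finrank K (annihilatorPiece 𝒜 I x k) = 0 := by
    rw [Submodule.finrank_eq_zero, annihilatorPiece, ← disjoint_iff, disjoint_comm,
      LinearMap.disjoint_ker_iff_injOn]
    rfl
  have hdim := hilbertFunction_add_finrank_annihilatorPiece hI hx k
  rw [Set.BijOn, and_iff_right hmaps, hinj, surjOn_mul_quotientPiece_iff hI hx]
  omega

section LinearForm

variable {x : A}

theorem hilbertFunction_sup_span_singleton_zero (hI : I.IsHomogeneous 𝒜) (hx : x ∈ 𝒜 1) :
    hilbertFunction 𝒜 (I ⊔ Ideal.span {x}) 0 = hilbertFunction 𝒜 I 0 := by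
  have hpiece : idealPiece 𝒜 (I ⊔ Ideal.span {x}) 0 = idealPiece 𝒜 I 0 := by
    ext f
    refine and_congr_left fun hf => ⟨fun h => ?_, fun h => Ideal.mem_sup_left h⟩
    obtain ⟨g, hg⟩ := mem_sup_span_singleton.1 h
    have hcomp := hI 0 hg
    rwa [DirectSum.decompose_sub, DirectSum.sub_apply, Submodule.coe_sub,
      DirectSum.decompose_of_mem_same 𝒜 hf,
      DirectSum.coe_decompose_mul_of_left_mem_of_not_le 𝒜 hx (by decide),
      sub_zero] at hcomp
  have hsup := hilbertFunction_add_finrank_idealPiece (𝒜 := 𝒜) (I ⊔ Ideal.span {x}) 0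
  have hdim := hilbertFunction_add_finrank_idealPiece (𝒜 := 𝒜) I 0
  rw [hpiece] at hsup
  omega

theorem hilbertFunction_le_partialSum (hI : I.IsHomogeneous 𝒜) (hx : x ∈ 𝒜 1) :
    hilbertFunction 𝒜 I ≤ partialSum (hilbertFunction 𝒜 (I ⊔ Ideal.span {x})) := by
  intro k
  induction k with
  | zero => rw [partialSum_zero, hilbertFunction_sup_span_singleton_zero hI hx]
  | succ k ih =>
    have hdim := hilbertFunction_add_finrank_annihilatorPiece hI hx k
    rw [add_comm 1 k] at hdim
    rw [partialSum_succ]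
    exact (Nat.le.intro hdim).trans (Nat.add_le_add_right ih _)

theorem isSMulRegular_iff_hilbertFunction_eq_partialSum (hI : I.IsHomogeneous 𝒜) (hx : x ∈ 𝒜 1) :
    IsSMulRegular (A ⧸ I) x ↔
      hilbertFunction 𝒜 I = partialSum (hilbertFunction 𝒜 (I ⊔ Ideal.span {x})) := by
  have hdim k := hilbertFunction_add_finrank_annihilatorPiece hI hx k
  simp only [add_comm 1] at hdim
  rw [isSMulRegular_quotient_iff_annihilatorPiece hI hx]
  constructor
  · intro hann
    funext k
    induction k with
    | zero => rw [partialSum_zero, hilbertFunction_sup_span_singleton_zero hI hx]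
    | succ k ih => rw [partialSum_succ, ← ih, ← hdim k, hann k, finrank_bot, add_zero]
  · intro hsum k
    have hsucc := congrFun hsum (k + 1)
    rw [partialSum_succ, ← hsum, ← hdim k] at hsucc
    exact Submodule.finrank_eq_zero.1 (by omega)

end LinearForm

end Hilbert

theorem mem_of_forall_mul_mem_of_isSMulRegular {A : Type*} [CommRing A] {I : Ideal A} {V : Set A}
    {y f : A} {N : ℕ} (hy : IsSMulRegular (A ⧸ I) y) (hyN : y ^ N ∈ I ⊔ Ideal.span V)
    (hf : ∀ x ∈ V, x * f ∈ I) : f ∈ I := by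
  have hcolon : I ⊔ Ideal.span V ≤ Submodule.colon I {f} :=
    sup_le (fun a ha => Submodule.mem_colon_singleton.2 (I.mul_mem_right f ha))
      (Ideal.span_le.2 fun a ha => Submodule.mem_colon_singleton.2 (hf a ha))
  exact isSMulRegular_quotient_iff.1 (hy.pow N) f (Submodule.mem_colon_singleton.1 (hcolon hyN))

theorem exists_finrank_lt_and_span_singleton_sup_eq {K E : Type*} [Field K] [AddCommGroup E]
    [Module K E] {V : Submodule K E} [FiniteDimensional K V] {x : E} (hxV : x ∈ V) (hx : x ≠ 0) :
    ∃ W ≤ V, finrank K W < finrank K V ∧ Submodule.span K {x} ⊔ W = V := by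
  obtain ⟨q, hq⟩ := Submodule.exists_isCompl (Submodule.span K {x})
  have hxq : x ∉ q := fun h =>
    hx (Submodule.disjoint_def.1 hq.disjoint x (Submodule.mem_span_singleton_self x) h)
  refine ⟨q ⊓ V, inf_le_right, Submodule.finrank_lt_finrank_of_lt ?_, ?_⟩
  · exact inf_le_right.lt_of_not_ge fun h => hxq (h hxV).1
  · rw [← sup_inf_assoc_of_le q ((Submodule.span_singleton_le_iff_mem x V).2 hxV),
      hq.sup_eq_top, top_inf_eq]

theorem ofList_ofFn {A : Type*} [CommRing A] {d : ℕ} (θ : Fin d → A) :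
    Ideal.ofList (List.ofFn θ) = Ideal.span (Set.range θ) :=
  congrArg Ideal.span (Set.ext fun x => List.mem_ofFn' θ x)

section RegularSequence

variable {K A : Type*} [Field K] [CommRing A] [Algebra K A] {𝒜 : ℕ → Submodule K A}
  {I : Ideal A}

variable (𝒜) in
/-- There is a regular sequence of `d` linear forms on `A ⧸ I`. The sequence is only required to be
weakly regular, so that the final quotient may vanish. -/
def HasLinearRegularSequence (I : Ideal A) (d : ℕ) : Prop :=
  ∃ l : List A, l.length = d ∧ (∀ x ∈ l, x ∈ 𝒜 1) ∧ IsWeaklyRegular (A ⧸ I) l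

theorem HasLinearRegularSequence.zero (I : Ideal A) : HasLinearRegularSequence 𝒜 I 0 :=
  ⟨[], rfl, by simp, .nil A (A ⧸ I)⟩

theorem hasLinearRegularSequence_succ {d : ℕ} :
    HasLinearRegularSequence 𝒜 I (d + 1) ↔ ∃ x ∈ 𝒜 1, IsSMulRegular (A ⧸ I) x ∧
      HasLinearRegularSequence 𝒜 (I ⊔ Ideal.span {x}) d := by
  constructor
  · rintro ⟨_ | ⟨x, l⟩, hlen, hlin, hreg⟩
    · simp at hlen
    · obtain ⟨hx, hl⟩ := List.forall_mem_cons.1 hlin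
      obtain ⟨hxreg, hlreg⟩ := isWeaklyRegular_quotient_cons.1 hreg
      exact ⟨x, hx, hxreg, l, Nat.succ_injective hlen, hl, hlreg⟩
  · rintro ⟨x, hx, hxreg, l, rfl, hl, hlreg⟩
    exact ⟨x :: l, rfl, List.forall_mem_cons.2 ⟨hx, hl⟩,
      isWeaklyRegular_quotient_cons.2 ⟨hxreg, hlreg⟩⟩

variable [GradedAlgebra 𝒜]

theorem isHomogeneous_sup_span (hI : I.IsHomogeneous 𝒜) {s : Set A} {e : ℕ}
    (hs : ∀ x ∈ s, x ∈ 𝒜 e) : (I ⊔ Ideal.span s).IsHomogeneous 𝒜 :=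
  hI.sup (Ideal.homogeneous_span 𝒜 s fun x hx => ⟨e, hs x hx⟩)

theorem isHomogeneous_sup_span_singleton (hI : I.IsHomogeneous 𝒜) {x : A} {e : ℕ}
    (hx : x ∈ 𝒜 e) : (I ⊔ Ideal.span {x}).IsHomogeneous 𝒜 :=
  isHomogeneous_sup_span hI (by rintro _ rfl; exact hx)

variable [∀ k, FiniteDimensional K (𝒜 k)]

theorem hilbertFunction_le_iterate_partialSum (hI : I.IsHomogeneous 𝒜) {l : List A}
    (hl : ∀ x ∈ l, x ∈ 𝒜 1) :
    hilbertFunction 𝒜 I ≤ partialSum^[l.length] (hilbertFunction 𝒜 (I ⊔ Ideal.ofList l)) := by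
  induction l generalizing I with
  | nil => simp
  | cons x l ih =>
    obtain ⟨hx, hl⟩ := List.forall_mem_cons.1 hl
    rw [Ideal.ofList_cons, ← sup_assoc, List.length_cons, Function.iterate_succ_apply']
    exact (hilbertFunction_le_partialSum hI hx).trans
      (partialSum_monotone (ih (isHomogeneous_sup_span_singleton hI hx) hl))

theorem isWeaklyRegular_iff_hilbertFunction_eq (hI : I.IsHomogeneous 𝒜) {l : List A}
    (hl : ∀ x ∈ l, x ∈ 𝒜 1) :
    IsWeaklyRegular (A ⧸ I) l ↔
      hilbertFunction 𝒜 I =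
        partialSum^[l.length] (hilbertFunction 𝒜 (I ⊔ Ideal.ofList l)) := by
  induction l generalizing I with
  | nil => simp
  | cons x l ih =>
    obtain ⟨hx, hl⟩ := List.forall_mem_cons.1 hl
    have hIx := isHomogeneous_sup_span_singleton hI hx
    rw [isWeaklyRegular_quotient_cons, ih hIx hl,
      isSMulRegular_iff_hilbertFunction_eq_partialSum hI hx, Ideal.ofList_cons, ← sup_assoc,
      List.length_cons, Function.iterate_succ_apply']
    constructor
    · rintro ⟨hx, hl⟩
      rw [hx, hl]
    · intro h
      have hle := hilbertFunction_le_iterate_partialSum hIx hl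
      have heq : hilbertFunction 𝒜 I = partialSum (hilbertFunction 𝒜 (I ⊔ Ideal.span {x})) :=
        (hilbertFunction_le_partialSum hI hx).antisymm (h ▸ partialSum_monotone hle)
      exact ⟨heq, partialSum_injective (heq.symm.trans h)⟩

theorem isWeaklyRegular_ofFn_iff_hilbertFunction_eq (hI : I.IsHomogeneous 𝒜) {d : ℕ}
    {θ : Fin d → A} (hθ : ∀ i, θ i ∈ 𝒜 1) :
    IsWeaklyRegular (A ⧸ I) (List.ofFn θ) ↔
      hilbertFunction 𝒜 I =
        partialSum^[d] (hilbertFunction 𝒜 (I ⊔ Ideal.span (Set.range θ))) := by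
  rw [isWeaklyRegular_iff_hilbertFunction_eq hI (by simpa using hθ), List.length_ofFn, ofList_ofFn]

theorem isSMulRegular_swap (hI : I.IsHomogeneous 𝒜) {x y : A} (hx : x ∈ 𝒜 1) (hy : y ∈ 𝒜 1)
    (hxreg : IsSMulRegular (A ⧸ I) x) (hyreg : IsSMulRegular (A ⧸ I ⊔ Ideal.span {x}) y) :
    IsSMulRegular (A ⧸ I) y ∧ IsSMulRegular (A ⧸ I ⊔ Ideal.span {y}) x := by
  have hxy : IsWeaklyRegular (A ⧸ I) [x, y] :=
    isWeaklyRegular_quotient_cons.2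
      ⟨hxreg, isWeaklyRegular_quotient_cons.2 ⟨hyreg, .nil A _⟩⟩
  rw [isWeaklyRegular_iff_hilbertFunction_eq hI (by simp [hx, hy])] at hxy
  have hyx : IsWeaklyRegular (A ⧸ I) [y, x] := by
    rw [isWeaklyRegular_iff_hilbertFunction_eq hI (by simp [hx, hy]), hxy]
    simp [Ideal.ofList_cons, sup_comm (Ideal.span {x})]
  obtain ⟨hy', hx'⟩ := isWeaklyRegular_quotient_cons.1 hyx
  exact ⟨hy', (isWeaklyRegular_quotient_cons.1 hx').1⟩

variable [Infinite K] [IsNoetherianRing A]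

theorem HasLinearRegularSequence.sup_span_singleton {d : ℕ} (hI : I.IsHomogeneous 𝒜)
    (h : HasLinearRegularSequence 𝒜 I (d + 1)) {x : A} (hx : x ∈ 𝒜 1)
    (hxreg : IsSMulRegular (A ⧸ I) x) :
    HasLinearRegularSequence 𝒜 (I ⊔ Ideal.span {x}) d := by
  induction d generalizing I x with
  | zero => exact .zero _
  | succ d ih =>
    obtain ⟨y, hy, hyreg, hyd⟩ := hasLinearRegularSequence_succ.1 h
    obtain ⟨z, hz, hzreg, -⟩ := hasLinearRegularSequence_succ.1 hyd
    have hsoc : ∀ f, (∀ v ∈ 𝒜 1, v * f ∈ I ⊔ Ideal.span {y}) → f ∈ I ⊔ Ideal.span {y} :=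
      fun f hf => isSMulRegular_quotient_iff.1 hzreg f (hf z hz)
    obtain ⟨w, hw, hwx, hwy⟩ := exists_isSMulRegular_quotient_and (𝒜 1)
      (fun f hf => mem_sup_span_singleton_of_forall_mul_mem hy hxreg hyreg hsoc hf) hsoc
    have hyw := (isSMulRegular_swap hI hy hw hyreg hwy).2
    have hxw := (isSMulRegular_swap hI hx hw hxreg hwx).2
    have hwd : HasLinearRegularSequence 𝒜 (I ⊔ Ideal.span {w}) (d + 1) := by
      have hywd := ih (isHomogeneous_sup_span_singleton hI hy) hyd hw hwy
      rw [sup_right_comm] at hywd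
      exact hasLinearRegularSequence_succ.2 ⟨y, hy, hyw, hywd⟩
    have hwxd := ih (isHomogeneous_sup_span_singleton hI hw) hwd hx hxw
    rw [sup_right_comm] at hwxd
    exact hasLinearRegularSequence_succ.2 ⟨w, hw, hwx, hwxd⟩

/-- In a Cohen-Macaulay quotient every linear system of parameters is a regular sequence; the
system enters through the space `V` of linear forms that it spans, so that its members can be
replaced by general ones. -/
theorem HasLinearRegularSequence.hilbertFunction_eq {d : ℕ} (hI : I.IsHomogeneous 𝒜)
    (h : HasLinearRegularSequence 𝒜 I d) {V : Submodule K A} (hV : V ≤ 𝒜 1)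
    (hVd : finrank K V ≤ d) {N : ℕ} (hN : ∀ f ∈ 𝒜 N, f ∈ I ⊔ Ideal.span V) :
    hilbertFunction 𝒜 I = partialSum^[d] (hilbertFunction 𝒜 (I ⊔ Ideal.span V)) := by
  have hfin : FiniteDimensional K V := Submodule.finiteDimensional_of_le hV
  induction d generalizing I V with
  | zero => simp [Submodule.finrank_eq_zero.1 (Nat.le_zero.1 hVd)]
  | succ d ih =>
    obtain ⟨y, hy, hyreg, -⟩ := hasLinearRegularSequence_succ.1 h
    have hyN : y ^ N ∈ I ⊔ Ideal.span V := hN _ (by simpa using SetLike.pow_mem_graded N hy)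
    have hann f (hf : ∀ x ∈ V, x * f ∈ I) : f ∈ I :=
      mem_of_forall_mul_mem_of_isSMulRegular hyreg hyN hf
    obtain ⟨x, hxV, hxreg, -⟩ := exists_isSMulRegular_quotient_and V hann hann
    have hx : x ∈ 𝒜 1 := hV hxV
    by_cases hx0 : x = 0
    · have htop : I = ⊤ :=
        I.eq_top_of_isUnit_mem (isSMulRegular_quotient_iff.1 hxreg 1 (by simp [hx0])) isUnit_one
      have hzero : hilbertFunction 𝒜 (⊤ : Ideal A) = 0 :=
        funext fun k => hilbertFunction_eq_zero_iff.2 fun _ _ => trivial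
      rw [htop, top_sup_eq, hzero, Function.iterate_fixed (by ext; simp [partialSum])]
    · obtain ⟨W, hWV, hWlt, rfl⟩ := exists_finrank_lt_and_span_singleton_sup_eq hxV hx0
      have hspan : I ⊔ Ideal.span (Submodule.span K {x} ⊔ W : Submodule K A) =
          I ⊔ Ideal.span {x} ⊔ Ideal.span W := by
        rw [← W.span_eq, ← Submodule.span_union, W.span_eq, Ideal.span,
          Submodule.span_span_of_tower, ← Ideal.span, Ideal.span_union, sup_assoc]
      rw [hspan] at hN ⊢
      rw [Function.iterate_succ_apply', ← ih (isHomogeneous_sup_span_singleton hI hx)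
        (h.sup_span_singleton hI hx hxreg) (hWV.trans hV) (by omega) hN
        (Submodule.finiteDimensional_of_le (hWV.trans hV))]
      exact (isSMulRegular_iff_hilbertFunction_eq_partialSum hI hx).1 hxreg

end RegularSequence

section KrullDimension

theorem ringKrullDim_le_of_isIntegral (R S : Type*) [CommRing R] [CommRing S] [Algebra R S]
    [Algebra.IsIntegral R S] : ringKrullDim S ≤ ringKrullDim R :=
  Order.krullDim_le_of_strictMono (PrimeSpectrum.comap (algebraMap R S)) fun p q hpq =>
    Ideal.IsIntegral.comap_lt_comap (R := R) (I := p.asIdeal) (J := q.asIdeal) hpq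

theorem length_le_ringKrullDim {A : Type*} [CommRing A] {I : Ideal A} {l : List A}
    (hreg : IsWeaklyRegular (A ⧸ I) l) (hne : I ⊔ Ideal.ofList l ≠ ⊤) :
    l.length ≤ ringKrullDim (A ⧸ I) := by
  induction l generalizing I with
  | nil =>
    rw [Ideal.ofList_nil, sup_bot_eq] at hne
    have := Ideal.Quotient.nontrivial_iff.2 hne
    simpa using ringKrullDim_nonneg_of_nontrivial (R := A ⧸ I)
  | cons x l ih =>
    rw [Ideal.ofList_cons, ← sup_assoc] at hne
    obtain ⟨hx, hl⟩ := isWeaklyRegular_quotient_cons.1 hreg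
    have hxdiv : Ideal.Quotient.mk I x ∈ nonZeroDivisors (A ⧸ I) := by
      rw [mem_nonZeroDivisors_iff_right]
      exact fun y hy => hx (by simpa [Algebra.smul_def, mul_comm] using hy)
    have hsucc := ringKrullDim_succ_le_of_surjective
      (Ideal.Quotient.factor (le_sup_left : I ≤ I ⊔ Ideal.span {x}))
      (Ideal.Quotient.factor_surjective _) hxdiv
      (Ideal.Quotient.eq_zero_iff_mem.2
        (Ideal.mem_sup_right (Ideal.mem_span_singleton_self x)))
    rw [List.length_cons, Nat.cast_add, Nat.cast_one]
    exact (add_le_add_left (ih hl hne) 1).trans hsucc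

variable {K A : Type*} [Field K] [CommRing A] [Algebra K A]

theorem ringKrullDim_le_card_of_finite {ι : Type*} [Finite ι] (y : ι → A)
    [Module.Finite (MvPolynomial.aeval (R := K) y).range A] : ringKrullDim A ≤ Nat.card ι :=
  calc ringKrullDim A ≤ ringKrullDim (MvPolynomial.aeval (R := K) y).range :=
        ringKrullDim_le_of_isIntegral _ _
    _ ≤ ringKrullDim (MvPolynomial ι K) :=
        ringKrullDim_le_of_surjective (MvPolynomial.aeval y).rangeRestrict.toRingHom
          (MvPolynomial.aeval y).rangeRestrict_surjective
    _ = Nat.card ι := by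
        rw [MvPolynomial.ringKrullDim_of_isNoetherianRing, ringKrullDim_eq_zero_of_field, zero_add]

variable {𝒜 : ℕ → Submodule K A} [GradedAlgebra 𝒜] {I : Ideal A} {ι : Type*} {θ : ι → A}

theorem exists_sub_sum_mul_mem [Fintype ι] (hI : I.IsHomogeneous 𝒜) (hθ : ∀ i, θ i ∈ 𝒜 1) {k : ℕ}
    {f : A} (hf : f ∈ 𝒜 (k + 1)) (hfθ : f ∈ I ⊔ Ideal.span (Set.range θ)) :
    ∃ g : ι → A, (∀ i, g i ∈ 𝒜 k) ∧ f - ∑ i, g i * θ i ∈ I := by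
  obtain ⟨a, ha, b, hb, rfl⟩ := Submodule.mem_sup.1 hfθ
  obtain ⟨c, rfl⟩ := Ideal.mem_span_range_iff_exists_fun.1 hb
  refine ⟨fun i => DirectSum.decompose 𝒜 (c i) k, fun i => SetLike.coe_mem _, ?_⟩
  have hcomp := congrArg (GradedRing.proj 𝒜 (k + 1)) (add_sub_cancel_right a (∑ i, c i * θ i))
  simp only [map_sub, map_sum, GradedRing.proj_apply, DirectSum.decompose_of_mem_same 𝒜 hf,
    fun i => DirectSum.coe_decompose_mul_add_of_right_mem 𝒜 (a := c i) (i := k) (hθ i)] at hcomp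
  rw [hcomp]
  exact hI (k + 1) ha

/-- Graded Nakayama: `A ⧸ I` is generated by its elements of degree at most `N` over the subalgebra
of the `θ i`. -/
theorem finite_quotient_of_forall_mem_sup [∀ k, FiniteDimensional K (𝒜 k)] [Finite ι]
    (hI : I.IsHomogeneous 𝒜) (hθ : ∀ i, θ i ∈ 𝒜 1) {N : ℕ}
    (hN : ∀ k > N, ∀ f ∈ 𝒜 k, f ∈ I ⊔ Ideal.span (Set.range θ)) :
    Module.Finite (MvPolynomial.aeval (R := K) fun i => Ideal.Quotient.mk I (θ i)).range
      (A ⧸ I) := by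
  classical
  cases nonempty_fintype ι
  set B := (MvPolynomial.aeval (R := K) fun i => Ideal.Quotient.mk I (θ i)).range
  let W : Submodule K (A ⧸ I) := ⨆ k ∈ Finset.range (N + 1), quotientPiece 𝒜 I k
  obtain ⟨T, hT⟩ : W.FG := Submodule.fg_biSup _ _ fun k _ =>
    Module.Finite.iff_fg.1 inferInstance
  let M : Submodule B (A ⧸ I) := Submodule.span B T
  have hWM : W ≤ M.restrictScalars K := by
    rw [← hT]
    exact Submodule.span_le_restrictScalars K B _
  have hlow : ∀ k ≤ N, ∀ f ∈ 𝒜 k, Ideal.Quotient.mk I f ∈ M := by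
    intro k hk f hf
    have hkW : quotientPiece 𝒜 I k ≤ W :=
      le_biSup (quotientPiece 𝒜 I) (Finset.mem_range_succ_iff.2 hk)
    exact hWM (hkW ⟨f, hf, rfl⟩)
  have hpiece : ∀ k, ∀ f ∈ 𝒜 k, Ideal.Quotient.mk I f ∈ M := by
    intro k
    induction k with
    | zero => exact hlow 0 (Nat.zero_le N)
    | succ k ih =>
      intro f hf
      rcases le_or_gt (k + 1) N with hk | hk
      · exact hlow (k + 1) hk f hf
      · obtain ⟨g, hg, hfg⟩ := exists_sub_sum_mul_mem hI hθ hf (hN _ hk f hf)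
        rw [Ideal.Quotient.eq.2 hfg, map_sum]
        refine sum_mem fun i _ => ?_
        rw [mul_comm, map_mul]
        exact M.smul_mem ⟨_, MvPolynomial.X i, MvPolynomial.aeval_X _ i⟩ (ih _ (hg i))
  refine ⟨⟨T, eq_top_iff.2 fun y _ => ?_⟩⟩
  obtain ⟨f, rfl⟩ := Ideal.Quotient.mk_surjective y
  rw [← DirectSum.sum_support_decompose 𝒜 f, map_sum]
  exact sum_mem fun k _ => hpiece k _ (SetLike.coe_mem _)

theorem ringKrullDim_quotient_le_card [∀ k, FiniteDimensional K (𝒜 k)] [Finite ι]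
    (hI : I.IsHomogeneous 𝒜) (hθ : ∀ i, θ i ∈ 𝒜 1) {N : ℕ}
    (hN : ∀ k > N, ∀ f ∈ 𝒜 k, f ∈ I ⊔ Ideal.span (Set.range θ)) :
    ringKrullDim (A ⧸ I) ≤ Nat.card ι :=
  have := finite_quotient_of_forall_mem_sup hI hθ hN
  ringKrullDim_le_card_of_finite (K := K) fun i => Ideal.Quotient.mk I (θ i)

end KrullDimension

open MvPolynomial

attribute [local instance] MvPolynomial.gradedAlgebra

section DegRevLex

variable {σ : Type*} [LinearOrder σ] {u v : σ →₀ ℕ}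

theorem degRevLexLT_or (huv : u.degree = v.degree) (hne : u ≠ v) :
    DegRevLexLT u v ∨ DegRevLexLT v u := by
  obtain ⟨p, hp, hmax⟩ := (u.neLocus v).exists_max_image id (Finsupp.nonempty_neLocus_iff.2 hne)
  have heq l (hl : p < l) : u l = v l :=
    Finsupp.notMem_neLocus.1 fun h => (hmax l h).not_gt hl
  rcases lt_or_gt_of_ne (Finsupp.mem_neLocus.1 hp) with h | h
  · exact .inr (.inr ⟨huv.symm, p, h, fun l hl => (heq l hl).symm⟩)
  · exact .inl (.inr ⟨huv, p, h, heq⟩)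

theorem degRevLexLT_add_left (h : DegRevLexLT u v) (w : σ →₀ ℕ) :
    DegRevLexLT (w + u) (w + v) := by
  have hdeg (a : σ →₀ ℕ) : (a.sum fun _ e => e) = a.degree := rfl
  simp only [DegRevLexLT, hdeg, map_add, Finsupp.add_apply, add_lt_add_iff_left,
    add_right_inj] at h ⊢
  exact h

/-- Decreasing `w`-weight refines the degree reverse lexicographic order in degree `k`. -/
def ReversesDegRevLex (w : σ → ℕ) (k : ℕ) : Prop :=
  ∀ ⦃u v : σ →₀ ℕ⦄, u.degree = k → v.degree = k → DegRevLexLT u v →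
    Finsupp.weight w v < Finsupp.weight w u

theorem reversesDegRevLex_of_mul_le [Finite σ] {w : σ → ℕ} {B k : ℕ} (hpos : ∀ i, 0 < w i)
    (hw : ∀ i j, i < j → B * w i ≤ w j) (hk : k < B) : ReversesDegRevLex w k := by
  cases nonempty_fintype σ
  rintro u v hu hv (h | ⟨-, p, hp, heq⟩)
  · exact absurd (hu.trans hv.symm) h.ne
  have hsmall : ∑ i with i < p, v i * w i < w p := by
    refine lt_of_mul_lt_mul_left (a := B) ?_ B.zero_le
    calc B * ∑ i with i < p, v i * w i = ∑ i with i < p, v i * (B * w i) := by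
          simp only [Finset.mul_sum, mul_left_comm]
      _ ≤ ∑ i, v i * w p :=
          (Finset.sum_le_sum fun i hi =>
            Nat.mul_le_mul_left _ (hw i p (Finset.mem_filter.1 hi).2)).trans
            (Finset.sum_le_sum_of_subset (Finset.filter_subset _ _))
      _ = k * w p := by rw [← Finset.sum_mul, ← Finsupp.degree_eq_sum, hv]
      _ < B * w p := Nat.mul_lt_mul_of_pos_right hk (hpos p)
  have hle : ∑ i, v i * w i + w p ≤ ∑ i, u i * w i + ∑ i with i < p, v i * w i := by
    have hwp : w p = ∑ i, if i = p then w i else 0 := by simp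
    rw [hwp, Finset.sum_filter, ← Finset.sum_add_distrib, ← Finset.sum_add_distrib]
    refine Finset.sum_le_sum fun i _ => ?_
    rcases lt_trichotomy i p with hi | rfl | hi
    · simp [hi, hi.ne]
    · simpa [Nat.succ_mul] using Nat.mul_le_mul_right (w i) hp
    · simp [hi.ne', hi.not_gt, heq i hi]
  have hweight (a : σ →₀ ℕ) : Finsupp.weight w a = ∑ i, a i * w i := by
    rw [Finsupp.weight_apply, Finsupp.sum_fintype _ _ fun i => zero_smul ℕ (w i)]
    rfl
  rw [hweight, hweight]
  omega

variable (σ) in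
theorem exists_reversesDegRevLex [Finite σ] (D : ℕ) :
    ∃ w : σ → ℕ, ∀ k ≤ D, ReversesDegRevLex w k := by
  cases nonempty_fintype σ
  let rank := (Fintype.orderIsoFinOfCardEq σ rfl).symm
  refine ⟨fun i => (D + 1) ^ (rank i : ℕ), fun k hk => reversesDegRevLex_of_mul_le (B := D + 1)
    (fun i => by positivity) (fun i j hij => ?_) (Nat.lt_succ_of_le hk)⟩
  rw [← pow_succ']
  exact Nat.pow_le_pow_right D.succ_pos (rank.strictMono hij)

end DegRevLex

section LeadingExponent

variable {σ R : Type*} [LinearOrder σ] [CommSemiring R] {f : MvPolynomial σ R} {u : σ →₀ ℕ}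

/-- `u` is the exponent of the leading monomial of `f` in the degree reverse lexicographic
order. -/
def IsLeadingExponent (f : MvPolynomial σ R) (u : σ →₀ ℕ) : Prop :=
  u ∈ f.support ∧ ∀ v ∈ f.support, v ≠ u → DegRevLexLT v u

theorem exists_isLeadingExponent [Finite σ] {k : ℕ} (hf : f.IsHomogeneous k) (hf0 : f ≠ 0) :
    ∃ u, IsLeadingExponent f u := by
  obtain ⟨w, hw⟩ := exists_reversesDegRevLex σ k
  obtain ⟨u, hu, hmin⟩ := f.support.exists_min_image (Finsupp.weight w) (support_nonempty.2 hf0)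
  have hdeg v (hv : v ∈ f.support) : v.degree = k := (hf.degree_eq_sum_deg_support hv).symm
  refine ⟨u, hu, fun v hv hne => ?_⟩
  refine (degRevLexLT_or ((hdeg v hv).trans (hdeg u hu).symm) hne).resolve_right fun huv => ?_
  exact (hmin v hv).not_gt (hw k le_rfl (hdeg u hu) (hdeg v hv) huv)

theorem IsLeadingExponent.monomial_mul (h : IsLeadingExponent f u) (w : σ →₀ ℕ) :
    IsLeadingExponent (monomial w 1 * f) (w + u) := by
  refine ⟨?_, fun v hv hne => ?_⟩
  · rw [MvPolynomial.mem_support_iff, coeff_monomial_mul, one_mul]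
    exact MvPolynomial.mem_support_iff.1 h.1
  · rw [MvPolynomial.mem_support_iff, coeff_monomial_mul', one_mul] at hv
    obtain ⟨hw, hv⟩ := ite_ne_right_iff.1 hv
    obtain ⟨v, rfl⟩ := exists_add_of_le hw
    rw [add_tsub_cancel_left] at hv
    exact degRevLexLT_add_left
      (h.2 v (MvPolynomial.mem_support_iff.2 hv) (ne_of_apply_ne _ hne)) w

theorem IsLeadingExponent.homogeneousComponent (h : IsLeadingExponent f u) :
    IsLeadingExponent (homogeneousComponent u.degree f) u := by
  simp only [IsLeadingExponent, MvPolynomial.mem_support_iff, coeff_homogeneousComponent,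
    ite_ne_right_iff] at h ⊢
  exact ⟨⟨trivial, h.1⟩, fun v hv => h.2 v hv.2⟩

end LeadingExponent

section InitialIdeal

variable {σ K : Type*} [LinearOrder σ] [Field K] {I : Ideal (MvPolynomial σ K)}

theorem initialIdeal_eq_span (I : Ideal (MvPolynomial σ K)) :
    initialIdeal I =
      Ideal.span ((fun u => monomial u (1 : K)) '' {u | ∃ f ∈ I, IsLeadingExponent f u}) := by
  refine congrArg Ideal.span (Set.ext fun m => ⟨?_, ?_⟩)
  · rintro ⟨f, hf, u, hu, rfl, h⟩
    exact ⟨u, ⟨f, hf, hu, h⟩, rfl⟩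
  · rintro ⟨u, ⟨f, hf, hu, h⟩, rfl⟩
    exact ⟨f, hf, u, hu, rfl, h⟩

theorem monomial_mem_initialIdeal {f : MvPolynomial σ K} {u : σ →₀ ℕ} (hf : f ∈ I)
    (h : IsLeadingExponent f u) : monomial u (1 : K) ∈ initialIdeal I := by
  rw [initialIdeal_eq_span]
  exact Ideal.subset_span ⟨u, ⟨f, hf, h⟩, rfl⟩

theorem isHomogeneous_initialIdeal (I : Ideal (MvPolynomial σ K)) :
    (initialIdeal I).IsHomogeneous (homogeneousSubmodule σ K) := by
  rw [initialIdeal_eq_span]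
  refine Ideal.homogeneous_span _ _ ?_
  rintro _ ⟨u, -, rfl⟩
  exact ⟨u.degree, isHomogeneous_monomial 1 rfl⟩

theorem exists_isLeadingExponent_of_mem_initialIdeal
    (hI : I.IsHomogeneous (homogeneousSubmodule σ K)) {g : MvPolynomial σ K}
    (hg : g ∈ initialIdeal I) {u : σ →₀ ℕ} (hu : u ∈ g.support) :
    ∃ f ∈ idealPiece (homogeneousSubmodule σ K) I u.degree, IsLeadingExponent f u := by
  rw [initialIdeal_eq_span, mem_ideal_span_monomial_image] at hg
  obtain ⟨v, ⟨f, hf, hv⟩, hle⟩ := hg u hu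
  obtain ⟨w, rfl⟩ := exists_add_of_le hle
  have hlead := (hv.monomial_mul w).homogeneousComponent
  rw [add_comm] at hlead
  exact ⟨_, ⟨homogeneousComponent_mem_of_mem hI (I.mul_mem_left _ hf) _,
    homogeneousComponent_isHomogeneous _ _⟩, hlead⟩

variable [Finite σ]

instance finiteDimensional_homogeneousSubmodule (k : ℕ) :
    FiniteDimensional K (homogeneousSubmodule σ K k) :=
  Module.Finite.iff_fg.2 (homogeneousSubmodule_fg σ K k)

/-- Macaulay: the forms supported on monomials outside the initial ideal form a complement of
`in(I)` that meets `I` trivially. -/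
theorem hilbertFunction_initialIdeal_le (I : Ideal (MvPolynomial σ K)) :
    hilbertFunction (homogeneousSubmodule σ K) (initialIdeal I) ≤
      hilbertFunction (homogeneousSubmodule σ K) I := by
  intro k
  set P := idealPiece (homogeneousSubmodule σ K) I k with hP
  set Q := idealPiece (homogeneousSubmodule σ K) (initialIdeal I) k with hQ
  let N : Submodule K (MvPolynomial σ K) :=
    homogeneousSubmodule σ K k ⊓ restrictSupport K {u | monomial u (1 : K) ∉ initialIdeal I}
  have : FiniteDimensional K N := Submodule.finiteDimensional_of_le inf_le_left
  have hPN : P ⊓ N = ⊥ := by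
    refine (Submodule.eq_bot_iff _).2 fun f hf => by_contra fun hf0 => ?_
    obtain ⟨⟨hfI, hfk⟩, -, hfN⟩ := hf
    obtain ⟨u, hu⟩ := exists_isLeadingExponent hfk hf0
    exact hfN hu.1 (monomial_mem_initialIdeal hfI hu)
  have hQN : homogeneousSubmodule σ K k ≤ Q ⊔ N := by
    intro f hf
    rw [← support_sum_monomial_coeff f]
    refine sum_mem fun u hu => ?_
    have huk := isHomogeneous_monomial (coeff u f) (hf.degree_eq_sum_deg_support hu).symm
    by_cases hmem : monomial u (1 : K) ∈ initialIdeal I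
    · refine Submodule.mem_sup_left ⟨?_, huk⟩
      rw [← mul_one (coeff u f), ← C_mul_monomial]
      exact Ideal.mul_mem_left _ _ hmem
    · exact Submodule.mem_sup_right ⟨huk, (monomial_mem_restrictSupport K).2 (.inl hmem)⟩
  have hdimP := Submodule.finrank_sup_add_finrank_inf_eq P N
  have hdimQ := Submodule.finrank_sup_add_finrank_inf_eq Q N
  have hle : finrank K ↥(P ⊔ N) ≤ _ := Submodule.finrank_mono (sup_le inf_le_right inf_le_left)
  have hge := Submodule.finrank_mono hQN
  rw [hPN, finrank_bot] at hdimP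
  rw [← hilbertFunction_add_finrank_idealPiece I k, ← hP] at hle
  rw [← hilbertFunction_add_finrank_idealPiece (initialIdeal I) k, ← hQ] at hge
  change hilbertFunction _ (initialIdeal I) k ≤ hilbertFunction _ I k
  omega

end InitialIdeal

section Limit

theorem eval_equivPolynomial {R : Type*} [CommRing R] (f : PolynomialModule R R) (t : R) :
    (PolynomialModule.equivPolynomial f).eval t = PolynomialModule.eval t f := by
  rw [← Polynomial.coe_aeval_eq_eval, PolynomialModule.aeval_equivPolynomial,
    PolynomialModule.eval_map', Algebra.linearMap_apply, Algebra.algebraMap_self_apply]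

variable {K V : Type*} [Field K] [AddCommGroup V] [Module K V]

theorem eventually_linearIndependent_eval {ι : Type*} [Finite ι] (p : ι → PolynomialModule K V)
    {t₀ : K} (h : LinearIndependent K fun j => PolynomialModule.eval t₀ (p j)) :
    ∀ᶠ t in Filter.cofinite, LinearIndependent K fun j => PolynomialModule.eval t (p j) := by
  classical
  cases nonempty_fintype ι
  obtain ⟨L, hL⟩ := LinearMap.exists_leftInverse_of_injective
    (Fintype.linearCombination K fun j => PolynomialModule.eval t₀ (p j))
    (LinearMap.ker_eq_bot.2 h.fintypeLinearCombination_injective)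
  let M : Matrix ι ι (Polynomial K) := Matrix.of fun j i =>
    PolynomialModule.equivPolynomial (PolynomialModule.map K (LinearMap.proj i ∘ₗ L) (p j))
  have hM (t : K) :
      M.det.eval t = (Matrix.of fun j => L (PolynomialModule.eval t (p j))).det := by
    rw [← Polynomial.coe_evalRingHom, RingHom.map_det]
    congr 1
    ext j i
    exact (eval_equivPolynomial _ t).trans (PolynomialModule.eval_map K _ (p j) t)
  have hM₀ : M.det ≠ 0 := by
    have hone : (Matrix.of fun j => L (PolynomialModule.eval t₀ (p j))) = 1 := by
      ext j i
      have hj := LinearMap.congr_fun hL (Pi.single j 1)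
      rw [LinearMap.comp_apply, Fintype.linearCombination_apply_single, one_smul,
        LinearMap.id_apply] at hj
      simp [hj, Matrix.one_apply, Pi.single_apply, eq_comm]
    intro h0
    simpa [h0, hone] using hM t₀
  refine (Polynomial.eventually_cofinite_not_isRoot hM₀).mono fun t ht => ?_
  rw [Polynomial.IsRoot, hM] at ht
  exact LinearIndependent.of_comp L (Matrix.linearIndependent_rows_of_det_ne_zero ht)

/-- The vectors `p(0)`, where `p` is a polynomial family of vectors with `p(t) ∈ W t` for all
`t ≠ 0`: the part of the limit of `W t` at `t = 0` that is reached polynomially. -/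
noncomputable def limitSubmodule (W : K → Submodule K V) : Submodule K V :=
  (⨅ t ≠ 0, (W t).comap (PolynomialModule.eval t)).map (PolynomialModule.eval 0)

theorem mem_limitSubmodule {W : K → Submodule K V} {x : V} :
    x ∈ limitSubmodule W ↔ ∃ p : PolynomialModule K V,
      (∀ t ≠ 0, PolynomialModule.eval t p ∈ W t) ∧ PolynomialModule.eval 0 p = x := by
  simp [limitSubmodule]

theorem eventually_finrank_le_of_le_limitSubmodule {W : K → Submodule K V}
    [∀ t, FiniteDimensional K (W t)] {U : Submodule K V} [FiniteDimensional K U]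
    (hU : U ≤ limitSubmodule W) : ∀ᶠ t in Filter.cofinite, finrank K U ≤ finrank K (W t) := by
  let b := finBasis K U
  choose p hpW hp0 using fun j => mem_limitSubmodule.1 (hU (b j).2)
  have hb : LinearIndependent K fun j => PolynomialModule.eval 0 (p j) := by
    simp only [hp0]
    exact b.linearIndependent.map' U.subtype U.ker_subtype
  filter_upwards [eventually_linearIndependent_eval p hb, Filter.eventually_cofinite_ne 0]
    with t ht ht0
  have hW : LinearIndependent K fun j => (⟨_, hpW j t ht0⟩ : W t) :=
    LinearIndependent.of_comp (W t).subtype ht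
  simpa using hW.fintype_card_le_finrank

end Limit

section Torus

section CommSemiring

variable {σ R : Type*} [CommSemiring R]

/-- The action of `t` under the one-parameter subgroup with weights `w` of the torus of diagonal
changes of coordinates. -/
noncomputable def torusScale (w : σ → ℕ) (t : R) : MvPolynomial σ R →ₐ[R] MvPolynomial σ R :=
  aeval fun i => t ^ w i • X i

variable {w : σ → ℕ} {t : R}

theorem torusScale_monomial (u : σ →₀ ℕ) (a : R) :
    torusScale w t (monomial u a) = t ^ Finsupp.weight w u • monomial u a := by
  rw [torusScale, aeval_monomial, monomial_eq, Finsupp.weight_apply]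
  simp only [Finsupp.prod, Finsupp.sum, smul_pow, Finset.prod_smul, ← pow_mul, smul_eq_mul,
    algebraMap_eq, ← Finset.prod_pow_eq_pow_sum, mul_comm (w _), mul_smul_comm]

theorem isHomogeneous_torusScale {f : MvPolynomial σ R} {k : ℕ} (hf : f.IsHomogeneous k) :
    (torusScale w t f).IsHomogeneous k := by
  rw [← one_mul k]
  exact hf.aeval _ fun i => (homogeneousSubmodule σ R 1).smul_mem (t ^ w i) (isHomogeneous_X R i)

end CommSemiring

variable {σ K : Type*} [Field K] {w : σ → ℕ} {t : K}

theorem torusScale_torusScale_inv (ht : t ≠ 0) (f : MvPolynomial σ K) :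
    torusScale w t (torusScale w t⁻¹ f) = f := by
  have h : (torusScale w t).comp (torusScale w t⁻¹) = AlgHom.id K _ := by
    ext1 i
    simp [torusScale, smul_smul, ht]
  exact DFunLike.congr_fun h f

variable {I : Ideal (MvPolynomial σ K)} {G : Set (MvPolynomial σ K)} {k : ℕ}

theorem torusScale_mem_sup_span_image {f : MvPolynomial σ K} (hf : f ∈ Ideal.span G) :
    torusScale w t f ∈ I ⊔ Ideal.span (torusScale w t '' G) := by
  rw [← Ideal.map_span]
  exact Ideal.mem_sup_right (Ideal.mem_map_of_mem _ hf)

/-- The degree `k` piece of the ideal `t • I + (G)`, where `t` acts by `torusScale w`. -/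
noncomputable def torusFamily (w : σ → ℕ) (I : Ideal (MvPolynomial σ K))
    (G : Set (MvPolynomial σ K)) (k : ℕ) (t : K) : Submodule K (MvPolynomial σ K) :=
  (idealPiece (homogeneousSubmodule σ K) (I ⊔ Ideal.span (torusScale w t⁻¹ '' G)) k).map
    (torusScale w t).toLinearMap

theorem mem_limitSubmodule_torusFamily_of_mem_span {f : MvPolynomial σ K}
    (hf : f ∈ idealPiece (homogeneousSubmodule σ K) (Ideal.span G) k) :
    f ∈ limitSubmodule (torusFamily w I G k) := by
  refine mem_limitSubmodule.2 ⟨PolynomialModule.single K 0 f, fun t ht => ?_, ?_⟩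
  · rw [PolynomialModule.eval_single, pow_zero, one_smul]
    exact ⟨_, ⟨torusScale_mem_sup_span_image hf.1, isHomogeneous_torusScale hf.2⟩,
      torusScale_torusScale_inv ht f⟩
  · rw [PolynomialModule.eval_single, pow_zero, one_smul]

variable [LinearOrder σ]

theorem exists_polynomialModule_eval_smul_eq_torusScale {f : MvPolynomial σ K} {u : σ →₀ ℕ}
    (hw : ReversesDegRevLex w k) (hf : f.IsHomogeneous k) (hu : IsLeadingExponent f u) :
    ∃ p : PolynomialModule K (MvPolynomial σ K),
      PolynomialModule.eval 0 p = monomial u (coeff u f) ∧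
        ∀ t : K, t ^ Finsupp.weight w u • PolynomialModule.eval t p = torusScale w t f := by
  have hdeg v (hv : v ∈ f.support) : v.degree = k := (hf.degree_eq_sum_deg_support hv).symm
  have hlt v (hv : v ∈ f.support) (hne : v ≠ u) : Finsupp.weight w u < Finsupp.weight w v :=
    hw (hdeg v hv) (hdeg u hu.1) (hu.2 v hv hne)
  refine ⟨∑ v ∈ f.support, PolynomialModule.single K (Finsupp.weight w v - Finsupp.weight w u)
    (monomial v (coeff v f)), ?_, fun t => ?_⟩
  · rw [map_sum, Finset.sum_eq_single_of_mem u hu.1]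
    · simp
    · intro v hv hne
      rw [PolynomialModule.eval_single, zero_pow (Nat.sub_ne_zero_of_lt (hlt v hv hne)), zero_smul]
  · conv_rhs => rw [← support_sum_monomial_coeff f]
    simp only [map_sum, Finset.smul_sum, PolynomialModule.eval_single, torusScale_monomial,
      smul_smul, ← pow_add]
    refine Finset.sum_congr rfl fun v hv => ?_
    rw [Nat.add_sub_cancel']
    obtain rfl | hne := eq_or_ne v u
    exacts [le_rfl, (hlt v hv hne).le]

theorem monomial_mem_limitSubmodule_torusFamily (hw : ReversesDegRevLex w k)
    {f : MvPolynomial σ K} (hf : f ∈ idealPiece (homogeneousSubmodule σ K) I k) {u : σ →₀ ℕ}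
    (hu : IsLeadingExponent f u) (a : K) :
    monomial u a ∈ limitSubmodule (torusFamily w I G k) := by
  obtain ⟨p, hp0, hp⟩ := exists_polynomialModule_eval_smul_eq_torusScale hw hf.2 hu
  have hlead : monomial u (coeff u f) ∈ limitSubmodule (torusFamily w I G k) := by
    refine mem_limitSubmodule.2 ⟨p, fun t ht => ?_, hp0⟩
    rw [← Submodule.smul_mem_iff _ (pow_ne_zero (Finsupp.weight w u) ht), hp]
    exact Submodule.mem_map_of_mem ⟨Ideal.mem_sup_left hf.1, hf.2⟩
  have hsmul := Submodule.smul_mem _ (a / coeff u f) hlead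
  rwa [smul_monomial, smul_eq_mul,
    div_mul_cancel₀ _ (MvPolynomial.mem_support_iff.1 hu.1)] at hsmul

theorem idealPiece_initialIdeal_sup_span_le_limitSubmodule
    (hI : I.IsHomogeneous (homogeneousSubmodule σ K)) (hw : ReversesDegRevLex w k)
    (hG : (Ideal.span G).IsHomogeneous (homogeneousSubmodule σ K)) :
    idealPiece (homogeneousSubmodule σ K) (initialIdeal I ⊔ Ideal.span G) k ≤
      limitSubmodule (torusFamily w I G k) := by
  rintro _ ⟨hf, hfk⟩
  obtain ⟨g, hg, h, hh, rfl⟩ := Submodule.mem_sup.1 hf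
  rw [← homogeneousComponent_eq_self hfk, map_add]
  refine add_mem ?_ (mem_limitSubmodule_torusFamily_of_mem_span
    ⟨homogeneousComponent_mem_of_mem hG hh k, homogeneousComponent_isHomogeneous k h⟩)
  have hgI := homogeneousComponent_mem_of_mem (isHomogeneous_initialIdeal I) hg k
  rw [← support_sum_monomial_coeff (homogeneousComponent k g)]
  refine sum_mem fun u hu => ?_
  obtain ⟨f, hf, hlead⟩ := exists_isLeadingExponent_of_mem_initialIdeal hI hgI hu
  have huk : u.degree = k :=
    ((homogeneousComponent_isHomogeneous k g).degree_eq_sum_deg_support hu).symm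
  rw [huk] at hf
  exact monomial_mem_limitSubmodule_torusFamily hw hf hlead _

variable [Finite σ]

theorem eventually_hilbertFunction_sup_span_torusScale_le
    (hI : I.IsHomogeneous (homogeneousSubmodule σ K)) (hw : ReversesDegRevLex w k)
    (hG : (Ideal.span G).IsHomogeneous (homogeneousSubmodule σ K)) :
    ∀ᶠ t : K in Filter.cofinite,
      hilbertFunction (homogeneousSubmodule σ K) (I ⊔ Ideal.span (torusScale w t⁻¹ '' G)) k ≤
        hilbertFunction (homogeneousSubmodule σ K) (initialIdeal I ⊔ Ideal.span G) k := by
  have hfin (t : K) : FiniteDimensional K (torusFamily w I G k t) := by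
    unfold torusFamily; infer_instance
  filter_upwards [eventually_finrank_le_of_le_limitSubmodule
    (idealPiece_initialIdeal_sup_span_le_limitSubmodule hI hw hG)] with t ht
  have hmap := ht.trans (Submodule.finrank_map_le _ _)
  have hinit := hilbertFunction_add_finrank_idealPiece (𝒜 := homogeneousSubmodule σ K)
    (initialIdeal I ⊔ Ideal.span G) k
  have hscale := hilbertFunction_add_finrank_idealPiece (𝒜 := homogeneousSubmodule σ K)
    (I ⊔ Ideal.span (torusScale w t⁻¹ '' G)) k
  omega

end Torus

theorem isRegular_map_quotientMk_iff {A : Type*} [CommRing A] {I : Ideal A} {l : List A} :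
    IsRegular (A ⧸ I) (l.map (Ideal.Quotient.mk I)) ↔
      IsWeaklyRegular (A ⧸ I) l ∧ I ⊔ Ideal.ofList l ≠ ⊤ := by
  have hmap : (⊤ : Ideal (A ⧸ I)) = (Ideal.ofList l).map (Ideal.Quotient.mk I) ↔
      I ⊔ Ideal.ofList l = ⊤ := by
    rw [← (Ideal.comap_injective_of_surjective _ Ideal.Quotient.mk_surjective).eq_iff,
      Ideal.comap_top, Ideal.comap_map_quotientMk, eq_comm]
  rw [isRegular_iff, ← Ideal.Quotient.algebraMap_eq, isWeaklyRegular_map_algebraMap_iff,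
    ← Ideal.map_ofList, Ideal.smul_eq_mul, Ideal.mul_top, Ne, Ideal.Quotient.algebraMap_eq, hmap]

section LefschetzSystem

variable {K A : Type*} [Field K] [CommRing A] [Algebra K A] (𝒜 : ℕ → Submodule K A)

/-- The numerical form, in terms of Hilbert functions, of the strong Lefschetz property: `θ` is a
regular sequence of linear forms on `A ⧸ I`, and the linear form `ω` is a strong Lefschetz element
of the quotient by `θ`, whose top degree is `s`. -/
structure IsLefschetzSystem (I : Ideal A) {d : ℕ} (θ : Fin d → A) (ω : A) (s : ℕ) : Prop where
  mem_one : ∀ i, θ i ∈ 𝒜 1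
  lefschetz_mem_one : ω ∈ 𝒜 1
  hilbertFunction_eq :
    hilbertFunction 𝒜 I = partialSum^[d] (hilbertFunction 𝒜 (I ⊔ Ideal.span (Set.range θ)))
  top_ne_zero : hilbertFunction 𝒜 (I ⊔ Ideal.span (Set.range θ)) s ≠ 0
  eq_zero_of_lt : ∀ k, s < k → hilbertFunction 𝒜 (I ⊔ Ideal.span (Set.range θ)) k = 0
  symmetric : ∀ i, 2 * i ≤ s → hilbertFunction 𝒜 (I ⊔ Ideal.span (Set.range θ)) i =
    hilbertFunction 𝒜 (I ⊔ Ideal.span (Set.range θ)) (s - i)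
  sup_pow_eq_zero : ∀ i, 2 * i ≤ s →
    hilbertFunction 𝒜 (I ⊔ Ideal.span (Set.range θ) ⊔ Ideal.span {ω ^ (s - 2 * i)}) (s - i) = 0

variable {𝒜} {I J : Ideal A} {d s : ℕ} {θ η : Fin d → A} {ω : A}
  [∀ k, FiniteDimensional K (𝒜 k)]

theorem IsLefschetzSystem.sup_ne_top (h : IsLefschetzSystem 𝒜 I θ ω s) :
    I ⊔ Ideal.span (Set.range θ) ≠ ⊤ :=
  fun htop => h.top_ne_zero (hilbertFunction_eq_zero_iff.2 fun _ _ => htop ▸ trivial)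

theorem IsLefschetzSystem.mem_of_lt (h : IsLefschetzSystem 𝒜 I θ ω s) :
    ∀ k > s, ∀ f ∈ 𝒜 k, f ∈ I ⊔ Ideal.span (Set.range θ) :=
  fun k hk => hilbertFunction_eq_zero_iff.1 (h.eq_zero_of_lt k hk)

variable [GradedAlgebra 𝒜]

theorem hilbertFunction_eq_of_le (hI : I.IsHomogeneous 𝒜) (hη : ∀ i, η i ∈ 𝒜 1)
    (hJI : hilbertFunction 𝒜 J ≤ hilbertFunction 𝒜 I)
    (hJθ : hilbertFunction 𝒜 J =
      partialSum^[d] (hilbertFunction 𝒜 (J ⊔ Ideal.span (Set.range θ))))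
    (hle : hilbertFunction 𝒜 (I ⊔ Ideal.span (Set.range η)) ≤
      hilbertFunction 𝒜 (J ⊔ Ideal.span (Set.range θ))) :
    hilbertFunction 𝒜 I =
        partialSum^[d] (hilbertFunction 𝒜 (I ⊔ Ideal.span (Set.range η))) ∧
      hilbertFunction 𝒜 (I ⊔ Ideal.span (Set.range η)) =
        hilbertFunction 𝒜 (J ⊔ Ideal.span (Set.range θ)) := by
  have hIη := hilbertFunction_le_iterate_partialSum hI (l := List.ofFn η) (by simpa using hη)
  rw [ofList_ofFn, List.length_ofFn] at hIη
  have hηJ := partialSum_monotone.iterate d hle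
  rw [← hJθ] at hηJ
  have heq := hIη.antisymm (hηJ.trans hJI)
  refine ⟨heq, partialSum_injective.iterate d ?_⟩
  rw [← heq, ← hJθ]
  exact (hIη.trans hηJ).antisymm hJI

theorem bijOn_mul_pow_quotientPiece_iff (hI : I.IsHomogeneous 𝒜) (hω : ω ∈ 𝒜 1) {i : ℕ}
    (hi : 2 * i ≤ s) :
    Set.BijOn (fun y => Ideal.Quotient.mk I ω ^ (s - 2 * i) * y) (quotientPiece 𝒜 I i)
        (quotientPiece 𝒜 I (s - i)) ↔
      hilbertFunction 𝒜 I i = hilbertFunction 𝒜 I (s - i) ∧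
        hilbertFunction 𝒜 (I ⊔ Ideal.span {ω ^ (s - 2 * i)}) (s - i) = 0 := by
  have hpow : ω ^ (s - 2 * i) ∈ 𝒜 (s - 2 * i) := by
    simpa using SetLike.pow_mem_graded (s - 2 * i) hω
  have hdeg : s - 2 * i + i = s - i := by omega
  have hbij := bijOn_mul_quotientPiece_iff (k := i) hI hpow
  rwa [hdeg, map_pow] at hbij

namespace IsLefschetzSystem

theorem isWeaklyRegular (h : IsLefschetzSystem 𝒜 I θ ω s) (hI : I.IsHomogeneous 𝒜) :
    IsWeaklyRegular (A ⧸ I) (List.ofFn θ) :=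
  (isWeaklyRegular_ofFn_iff_hilbertFunction_eq hI h.mem_one).2 h.hilbertFunction_eq

theorem ringKrullDim_eq (h : IsLefschetzSystem 𝒜 I θ ω s) (hI : I.IsHomogeneous 𝒜) :
    ringKrullDim (A ⧸ I) = d := by
  refine le_antisymm ?_ ?_
  · simpa using ringKrullDim_quotient_le_card hI h.mem_one h.mem_of_lt
  · simpa using length_le_ringKrullDim (h.isWeaklyRegular hI) (ofList_ofFn θ ▸ h.sup_ne_top)

theorem ringKrullDim_sup_le (h : IsLefschetzSystem 𝒜 I θ ω s) (hI : I.IsHomogeneous 𝒜) :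
    ringKrullDim (A ⧸ I ⊔ Ideal.span (Set.range θ)) ≤ 0 := by
  have hle := ringKrullDim_quotient_le_card (θ := Fin.elim0)
    (isHomogeneous_sup_span hI (Set.forall_mem_range.2 h.mem_one)) (fun i => i.elim0)
    fun k hk f hf => Ideal.mem_sup_left (h.mem_of_lt k hk f hf)
  simpa using hle

end IsLefschetzSystem

end LefschetzSystem

theorem isHomogeneous_of_homogeneousComponent_mem {σ R : Type*} [CommSemiring R]
    {I : Ideal (MvPolynomial σ R)} (h : ∀ f ∈ I, ∀ k, homogeneousComponent k f ∈ I) :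
    I.IsHomogeneous (homogeneousSubmodule σ R) := fun k f hf => by
  have hfk := h f hf k
  rw [← decomposition.decompose'_apply] at hfk
  exact hfk

section StrongLefschetz

variable {K : Type*} [Field K] {n : ℕ} {I : Ideal (MvPolynomial (Fin n) K)}

theorem hasLinearRegularSequence_of_isCMIdeal (h : IsCMIdeal I) {d : ℕ}
    (hd : ringKrullDim (MvPolynomial (Fin n) K ⧸ I) = d) :
    HasLinearRegularSequence (homogeneousSubmodule (Fin n) K) I d := by
  obtain ⟨d', hd', θ, hθ, hreg⟩ := h
  obtain rfl : d' = d := by exact_mod_cast hd'.symm.trans hd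
  exact ⟨List.ofFn θ, List.length_ofFn, by simpa using hθ.1,
    (isRegular_map_quotientMk_iff.1 hreg).1⟩

theorem exists_isLefschetzSystem_of_hasSLPIdeal [Infinite K]
    (hI : I.IsHomogeneous (homogeneousSubmodule (Fin n) K)) (h : HasSLPIdeal I) :
    ∃ (d : ℕ) (θ : Fin d → MvPolynomial (Fin n) K) (ω : MvPolynomial (Fin n) K) (s : ℕ),
      IsLefschetzSystem (homogeneousSubmodule (Fin n) K) I θ ω s := by
  obtain ⟨hCM, d, hd, θ, ⟨hθ, -⟩, ω, hω, s, ⟨hs, hgt⟩, hbij⟩ := h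
  have hzero k (hk : s < k) : hilbertFunction (homogeneousSubmodule (Fin n) K)
      (I ⊔ Ideal.span (Set.range θ)) k = 0 :=
    hilbertFunction_eq_zero_iff_quotientPiece_eq_bot.2 (hgt k hk)
  have hspan : Ideal.span (Submodule.span K (Set.range θ) : Set (MvPolynomial (Fin n) K)) =
      Ideal.span (Set.range θ) := Submodule.span_span_of_tower K _ _
  have hHilbert := (hasLinearRegularSequence_of_isCMIdeal hCM hd).hilbertFunction_eq hI
    (Submodule.span_le.2 (Set.range_subset_iff.2 hθ))
    ((finrank_range_le_card θ).trans_eq (Fintype.card_fin d))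
    (hspan ▸ hilbertFunction_eq_zero_iff.1 (hzero (s + 1) s.lt_succ_self))
  rw [hspan] at hHilbert
  have hbij' i (hi : 2 * i ≤ s) := (bijOn_mul_pow_quotientPiece_iff
    (isHomogeneous_sup_span hI (Set.forall_mem_range.2 hθ)) hω hi).1 (hbij i hi)
  exact ⟨d, θ, ω, s, hθ, hω, hHilbert,
    mt hilbertFunction_eq_zero_iff_quotientPiece_eq_bot.1 hs, hzero,
    fun i hi => (hbij' i hi).1, fun i hi => (hbij' i hi).2⟩

theorem IsLefschetzSystem.hasSLPIdeal {d s : ℕ} {θ : Fin d → MvPolynomial (Fin n) K}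
    {ω : MvPolynomial (Fin n) K}
    (h : IsLefschetzSystem (homogeneousSubmodule (Fin n) K) I θ ω s)
    (hI : I.IsHomogeneous (homogeneousSubmodule (Fin n) K)) : HasSLPIdeal I := by
  have hdim := h.ringKrullDim_eq hI
  have hlsop : IsLSOP I d θ := ⟨h.mem_one, h.ringKrullDim_sup_le hI⟩
  have hreg := isRegular_map_quotientMk_iff.2
    ⟨h.isWeaklyRegular hI, ofList_ofFn θ ▸ h.sup_ne_top⟩
  refine ⟨⟨d, hdim, θ, hlsop, hreg⟩, d, hdim, θ, hlsop, ω, h.lefschetz_mem_one, s,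
    ⟨mt hilbertFunction_eq_zero_iff_quotientPiece_eq_bot.2 h.top_ne_zero,
      fun k hk => hilbertFunction_eq_zero_iff_quotientPiece_eq_bot.1 (h.eq_zero_of_lt k hk)⟩,
    fun i hi => ?_⟩
  exact (bijOn_mul_pow_quotientPiece_iff
    (isHomogeneous_sup_span hI (Set.forall_mem_range.2 h.mem_one)) h.lefschetz_mem_one hi).2
    ⟨h.symmetric i hi, h.sup_pow_eq_zero i hi⟩

end StrongLefschetz

section Transfer

variable {σ K : Type*} [Field K] {I : Ideal (MvPolynomial σ K)}

theorem hilbertFunction_eq_zero_of_le [Finite σ] {k m : ℕ} (hkm : k ≤ m)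
    (hk : hilbertFunction (homogeneousSubmodule σ K) I k = 0) :
    hilbertFunction (homogeneousSubmodule σ K) I m = 0 := by
  rw [hilbertFunction_eq_zero_iff] at hk ⊢
  obtain ⟨e, rfl⟩ := exists_add_of_le hkm
  have hmul : homogeneousSubmodule σ K (k + e) ≤ I.restrictScalars K := by
    rw [← homogeneousSubmodule_one_pow, pow_add, homogeneousSubmodule_one_pow]
    exact Submodule.mul_le.2 fun f hf g _ => I.mul_mem_right g (hk f hf)
  exact hmul

theorem hilbertFunction_le_of_forall_le_succ [Finite σ] {J : Ideal (MvPolynomial σ K)} {s : ℕ}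
    (hle : ∀ k ≤ s + 1, hilbertFunction (homogeneousSubmodule σ K) I k ≤
      hilbertFunction (homogeneousSubmodule σ K) J k)
    (hs : hilbertFunction (homogeneousSubmodule σ K) J (s + 1) = 0) :
    hilbertFunction (homogeneousSubmodule σ K) I ≤
      hilbertFunction (homogeneousSubmodule σ K) J := by
  intro k
  obtain hk | hk := le_or_gt k (s + 1)
  · exact hle k hk
  · exact (hilbertFunction_eq_zero_of_le hk.le
      (Nat.le_zero.1 (hs ▸ hle (s + 1) le_rfl))).trans_le (Nat.zero_le _)

variable [LinearOrder σ] [Finite σ] [Infinite K]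

theorem exists_torusScale_hilbertFunction_le
    (hI : I.IsHomogeneous (homogeneousSubmodule σ K)) {G : Set (MvPolynomial σ K)}
    (hG : ∀ g ∈ G, g.IsHomogeneous 1) {ω : MvPolynomial σ K} (hω : ω.IsHomogeneous 1) (s : ℕ) :
    ∃ (w : σ → ℕ) (t : K),
      (∀ k ≤ s + 1, hilbertFunction (homogeneousSubmodule σ K)
          (I ⊔ Ideal.span (torusScale w t '' G)) k ≤
        hilbertFunction (homogeneousSubmodule σ K) (initialIdeal I ⊔ Ideal.span G) k) ∧
      ∀ i ≤ s, hilbertFunction (homogeneousSubmodule σ K) (I ⊔ Ideal.span (torusScale w t '' G) ⊔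
          Ideal.span {torusScale w t ω ^ (s - 2 * i)}) (s - i) ≤
        hilbertFunction (homogeneousSubmodule σ K) (initialIdeal I ⊔ Ideal.span G ⊔
          Ideal.span {ω ^ (s - 2 * i)}) (s - i) := by
  obtain ⟨w, hw⟩ := exists_reversesDegRevLex σ (s + 1)
  have hGω i : ∀ g ∈ G ∪ {ω ^ (s - 2 * i)}, ∃ e, g.IsHomogeneous e := by
    rintro g (hg | rfl)
    exacts [⟨1, hG g hg⟩, ⟨_, hω.pow _⟩]
  have hθ := (Filter.eventually_all_finite (Set.finite_Iic (s + 1))).2 fun k hk =>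
    eventually_hilbertFunction_sup_span_torusScale_le hI (hw k hk)
      (Ideal.homogeneous_span _ G fun g hg => ⟨1, hG g hg⟩)
  have hθω := (Filter.eventually_all_finite (Set.finite_Iic s)).2 fun i _ =>
    eventually_hilbertFunction_sup_span_torusScale_le hI (hw (s - i) (by omega))
      (Ideal.homogeneous_span _ _ (hGω i))
  obtain ⟨t, ht, htω⟩ := (hθ.and hθω).exists
  simp only [Set.image_union, Set.image_singleton, Ideal.span_union, ← sup_assoc, map_pow] at htω
  exact ⟨w, t⁻¹, ht, htω⟩

theorem exists_isLefschetzSystem_of_initialIdeal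
    (hI : I.IsHomogeneous (homogeneousSubmodule σ K)) {d s : ℕ} {θ : Fin d → MvPolynomial σ K}
    {ω : MvPolynomial σ K}
    (h : IsLefschetzSystem (homogeneousSubmodule σ K) (initialIdeal I) θ ω s) :
    ∃ (η : Fin d → MvPolynomial σ K) (ψ : MvPolynomial σ K),
      IsLefschetzSystem (homogeneousSubmodule σ K) I η ψ s := by
  obtain ⟨w, t, hle, hleω⟩ := exists_torusScale_hilbertFunction_le hI
    (Set.forall_mem_range.2 h.mem_one) h.lefschetz_mem_one s
  rw [← Set.range_comp] at hle hleω
  have hη i : (torusScale w t ∘ θ) i ∈ homogeneousSubmodule σ K 1 :=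
    isHomogeneous_torusScale (h.mem_one i)
  obtain ⟨hreg, heq⟩ := hilbertFunction_eq_of_le hI hη (hilbertFunction_initialIdeal_le I)
    h.hilbertFunction_eq
    (hilbertFunction_le_of_forall_le_succ hle (h.eq_zero_of_lt (s + 1) s.lt_succ_self))
  exact ⟨torusScale w t ∘ θ, torusScale w t ω, hη, isHomogeneous_torusScale h.lefschetz_mem_one,
    hreg, heq ▸ h.top_ne_zero, heq ▸ h.eq_zero_of_lt, heq ▸ h.symmetric, fun i hi =>
      Nat.le_zero.1 ((hleω i (by omega)).trans_eq (h.sup_pow_eq_zero i hi))⟩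

end Transfer

end GradedQuotient

/-- Lemma 3.2, Wiebe, extended to arbitrary homogeneous ideals. If
`S/in(I)` has the strong Lefschetz property, where `in(I)` is the initial ideal of the
homogeneous ideal `I` w.r.t. the degree reverse lexicographic order, then `S/I` has the
strong Lefschetz property. -/
theorem stmt8 (K : Type) [Field K] (hK : Infinite K) (n : ℕ)
    (I : Ideal (MvPolynomial (Fin n) K))
    (hhom : ∀ f ∈ I, ∀ k : ℕ, MvPolynomial.homogeneousComponent k f ∈ I)
    (h : HasSLPIdeal (initialIdeal I)) :
    HasSLPIdeal I := by
  have hI := GradedQuotient.isHomogeneous_of_homogeneousComponent_mem hhom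
  obtain ⟨d, θ, ω, s, hsys⟩ := GradedQuotient.exists_isLefschetzSystem_of_hasSLPIdeal
    (GradedQuotient.isHomogeneous_initialIdeal I) h
  obtain ⟨η, ψ, hsysI⟩ := GradedQuotient.exists_isLefschetzSystem_of_initialIdeal hI hsys
  exact hsysI.hasSLPIdeal hI
end

section
/- Let Γ be a (d−1)-dimensional simplicial complex on [n] satisfying the Link condition with respect to {i,j}, where 1 ≤ i < j ≤ n, and suppose dim C_Γ(ij) = d−1 and dim lk_Γ({i,j}) = d−3. If both C_Γ(ij) and lk_Γ({i,j}) are Cohen–Macaulay over an infinite field K, then Γ is Cohen–Macaulay over K. -/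
/-!
Let `S = K[x_1,…,x_n]`, let `a` and `b` be the ends of the edge, and let `φ : S → S` send
`x_a ↦ x_a x_b` and `x_b ↦ x_a + x_b` and fix the other variables. Then `φ` is injective and
`S = φ(S) ⊕ x_a φ(S)`, so `S/I_Γ` is a finite module over `S` through `φ`. Write `st` for the star
of the edge `{a, b}` and `J = φ⁻¹(I_Γ)`. There are exact sequences of such modules

  `0 → S/J → S/I_Γ → S/I_st → 0`  and  `0 → S/I_st → S/J → S/I_{C_Γ(ab)} → 0`,

the first obtained by splitting off the cyclic submodule generated by `1`, the second by
multiplication by `x_a`, because `J : x_a = I_st` and `J + (x_a) = I_{C_Γ(ab)}`. The Link condition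
is exactly what makes the cokernel in the first sequence the Stanley–Reisner ring of the star:
a monomial `x_F` outside `a, b` satisfies `x_a x_F ∈ φ(S) + I_Γ` as soon as one of `x_a x_F` and
`x_b x_F` is in `I_Γ`. The star is a double cone over the link, so its depth is the depth of the
link plus two, and the two sequences propagate the depth `d` from the contraction and the link
to `Γ`.

Cohen–Macaulayness is compared with depth through `Ext`: the Krull dimension of a Stanley–Reisner
ring is one more than the dimension of the complex, and over an infinite field a maximal regular
sequence can be chosen to consist of linear forms.
-/

section Depth

open CategoryTheory Abelian RingTheory.Sequence Pointwise

universe u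

/-- `DepthGE I M d` says that the `I`-depth of `M` is at least `d`. It is encoded by Rees' criterion
`Ext^k(R/I, M) = 0` for `k < d`, which needs no choice of a regular sequence. -/
def DepthGE {R : Type u} [CommRing R] (I : Ideal R) (M : Type u) [AddCommGroup M] [Module R M]
    (d : ℕ) : Prop :=
  ∀ k < d, Subsingleton (Ext (ModuleCat.of R (R ⧸ I)) (ModuleCat.of R M) k)

section CommRing

variable {R : Type u} [CommRing R] {I : Ideal R} {d : ℕ}
variable {M N : Type u} [AddCommGroup M] [Module R M] [AddCommGroup N] [Module R N]

theorem DepthGE.mono {e : ℕ} (h : DepthGE I M d) (hed : e ≤ d) : DepthGE I M e :=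
  fun k hk => h k (hk.trans_le hed)

theorem DepthGE.congr (e : M ≃ₗ[R] N) (h : DepthGE I M d) : DepthGE I N d := fun k hk =>
  ((extFunctorObj (ModuleCat.of R (R ⧸ I)) k).mapIso
    e.toModuleIso).addCommGroupIsoToAddEquiv.subsingleton_congr.mp (h k hk)

theorem depthGE_of_subsingleton [Subsingleton M] : DepthGE I M d := fun k _ =>
  have : Limits.IsZero (ModuleCat.of R M) := ModuleCat.isZero_of_subsingleton _
  ⟨fun x y => by
    rw [← x.comp_mk₀_id, ← y.comp_mk₀_id, this.eq_of_src (𝟙 _) 0, Ext.mk₀_zero, Ext.comp_zero,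
      Ext.comp_zero]⟩

theorem DepthGE.of_submodule (P : Submodule R M) (hP : DepthGE I P d) (hQ : DepthGE I (M ⧸ P) d) :
    DepthGE I M d := by
  intro k hk
  have hP := hP k hk
  have hQ := hQ k hk
  have hexact := LinearMap.exact_subtype_mkQ P
  have hshort := ModuleCat.shortComplex_shortExact
    (ModuleCat.shortComplexOfCompEqZero P.subtype P.mkQ hexact.linearMap_comp_eq_zero) hexact
    P.injective_subtype P.mkQ_surjective
  refine subsingleton_of_forall_eq 0 fun x => ?_
  obtain ⟨y, rfl⟩ := Ext.covariant_sequence_exact₂ (ModuleCat.of R (R ⧸ I)) hshort x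
    (hQ.elim _ _)
  rw [show y = 0 from hP.elim _ _, Ext.zero_comp]

theorem DepthGE.quotSMulTop {x : R} (hx : IsSMulRegular M x) (h : DepthGE I M (d + 1)) :
    DepthGE I (QuotSMulTop x M) d := by
  intro k hk
  have h₀ := h k (by lia)
  have h₁ := h (k + 1) (by lia)
  have hx' : IsSMulRegular (ModuleCat.of R M) x := hx
  refine subsingleton_of_forall_eq 0 fun z => ?_
  obtain ⟨y, rfl⟩ := Ext.covariant_sequence_exact₃ (ModuleCat.of R (R ⧸ I))
    hx'.smulShortComplex_shortExact z rfl (h₁.elim _ _)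
  rw [show y = 0 from h₀.elim _ _, Ext.zero_comp]
  rfl

theorem torsionOf_mkQ_eq_colon (P : Submodule R M) (m : M) :
    Ideal.torsionOf R (M ⧸ P) (P.mkQ m) = P.colon {m} := by
  ext r
  rw [Ideal.mem_torsionOf_iff, Submodule.mem_colon_singleton, ← map_smul, Submodule.mkQ_apply,
    Submodule.Quotient.mk_eq_zero]

/-- The exact sequence is `0 → R/(P : m) → M/P → M/(P + Rm) → 0`. -/
theorem DepthGE.quotient_of_colon {P : Submodule R M} (m : M)
    (hcolon : DepthGE I (R ⧸ P.colon {m}) d)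
    (hsup : DepthGE I (M ⧸ (P ⊔ Submodule.span R {m})) d) : DepthGE I (M ⧸ P) d := by
  rw [← torsionOf_mkQ_eq_colon P m] at hcolon
  have hspan : (Submodule.span R {m}).map P.mkQ = Submodule.span R {P.mkQ m} := by
    rw [Submodule.map_span, Set.image_singleton]
  refine .of_submodule ((Submodule.span R {m}).map P.mkQ) ?_
    (hsup.congr (Submodule.quotientQuotientEquivQuotientSup P (Submodule.span R {m})).symm)
  rw [hspan]
  exact hcolon.congr (Ideal.quotTorsionOfEquivSpanSingleton R (M ⧸ P) (P.mkQ m))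

theorem smul_top_quotSMulTop_lt_top {x : R} (hx : x ∈ I) (hI : I • (⊤ : Submodule R M) < ⊤) :
    I • (⊤ : Submodule R (QuotSMulTop x M)) < ⊤ := by
  refine lt_top_iff_ne_top.mpr fun eq => hI.ne ?_
  simpa [Submodule.comap_smul_top_of_surjective I _ (Submodule.mkQ_surjective _),
    Submodule.smul_mono_left ((Ideal.span_singleton_le_iff_mem I).mpr hx),
    ← Submodule.ideal_span_singleton_smul] using congrArg (Submodule.comap (Submodule.mkQ _)) eq

theorem smul_top_quotient_lt_top {J : Ideal R} (hJ : J ≤ I) (hI : I ≠ ⊤) :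
    I • (⊤ : Submodule R (R ⧸ J)) < ⊤ := by
  refine lt_top_iff_ne_top.mpr fun eq => hI ?_
  have h := congrArg (Submodule.comap (Submodule.mkQ J)) eq
  rwa [Submodule.comap_smul_top_of_surjective I _ (Submodule.mkQ_surjective _),
    Submodule.ker_mkQ, Submodule.comap_top, smul_eq_mul, Ideal.mul_top, sup_eq_left.mpr hJ] at h

theorem smul_top_quotient_eq_map_mkQ (I J : Ideal R) :
    I • (⊤ : Submodule R (R ⧸ J)) = Submodule.map J.mkQ I := by
  rw [← Submodule.range_mkQ J, ← Submodule.map_top, ← Submodule.map_smul'', smul_eq_mul,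
    Ideal.mul_top]

/-- `(R/J)/I(R/J)` is `R/(J + I)`. -/
noncomputable def quotientSMulTopEquiv (I J : Ideal R) :
    ((R ⧸ J) ⧸ I • (⊤ : Submodule R (R ⧸ J))) ≃ₗ[R] R ⧸ (J ⊔ I) :=
  (Submodule.quotEquivOfEq _ _ (smul_top_quotient_eq_map_mkQ I J)).trans
    (Submodule.quotientQuotientEquivQuotientSup J I)

theorem isSMulRegular_quotient_iff {J : Ideal R} {x : R} :
    IsSMulRegular (R ⧸ J) x ↔ ∀ f, x * f ∈ J → f ∈ J := by
  rw [isSMulRegular_iff_right_eq_zero_of_smul, (Submodule.mkQ_surjective J).forall]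
  simp_rw [← map_smul, Submodule.mkQ_apply, Submodule.Quotient.mk_eq_zero, smul_eq_mul]

end CommRing

section Noetherian

variable {R : Type u} [CommRing R] [IsNoetherianRing R] {I : Ideal R} {d : ℕ}
variable {M : Type u} [AddCommGroup M] [Module R M]

theorem depthGE_iff_exists_isRegular [Module.Finite R M] (hI : I • (⊤ : Submodule R M) < ⊤) :
    DepthGE I M d ↔ ∃ rs : List R, rs.length = d ∧ (∀ r ∈ rs, r ∈ I) ∧ IsRegular M rs := by
  have hsupp : Module.support R (R ⧸ I) = PrimeSpectrum.zeroLocus I := by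
    rw [Module.support_eq_zeroLocus, Ideal.annihilator_quotient]
  refine ⟨ModuleCat.exists_isRegular_of_exists_subsingleton_ext I d (ModuleCat.of R M) hI
    (ModuleCat.of R (R ⧸ I)) hsupp, ?_⟩
  rintro ⟨rs, rfl, hmem, hreg⟩
  exact ModuleCat.subsingleton_ext_of_exists_isRegular I (ModuleCat.of R (R ⧸ I)) hsupp.subset
    (ModuleCat.of R M) hI rs hmem hreg

theorem DepthGE.succ_of_quotSMulTop [Module.Finite R M] (hI : I • (⊤ : Submodule R M) < ⊤) {x : R}
    (hxI : x ∈ I) (hx : IsSMulRegular M x) (h : DepthGE I (QuotSMulTop x M) d) :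
    DepthGE I M (d + 1) := by
  obtain ⟨rs, rfl, hmem, hreg⟩ :=
    (depthGE_iff_exists_isRegular (smul_top_quotSMulTop_lt_top hxI hI)).mp h
  exact (depthGE_iff_exists_isRegular hI).mpr
    ⟨x :: rs, rfl, List.forall_mem_cons.mpr ⟨hxI, hmem⟩, hreg.cons hx⟩

theorem DepthGE.succ_of_quotient_sup_span {J : Ideal R} (hJ : J ≤ I) (hI : I ≠ ⊤) {x : R}
    (hxI : x ∈ I) (hx : ∀ f, x * f ∈ J → f ∈ J) (h : DepthGE I (R ⧸ (J ⊔ Ideal.span {x})) d) :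
    DepthGE I (R ⧸ J) (d + 1) := by
  refine .succ_of_quotSMulTop (smul_top_quotient_lt_top hJ hI) hxI
    (isSMulRegular_quotient_iff.mpr hx) (h.congr ?_)
  exact ((Submodule.quotEquivOfEq _ _ (Submodule.ideal_span_singleton_smul x ⊤).symm).trans
    (quotientSMulTopEquiv (Ideal.span {x}) J)).symm

variable {S : Type u} [CommRing S] [IsNoetherianRing S]

theorem DepthGE.of_algebra [Algebra R S] [Module S M] [IsScalarTower R S M] [Module.Finite R M]
    {J : Ideal S} (hIJ : I.map (algebraMap R S) ≤ J) (hJ : J • (⊤ : Submodule S M) < ⊤)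
    (h : DepthGE I M d) : DepthGE J M d := by
  have : Module.Finite S M := Module.Finite.of_restrictScalars_finite R S M
  have hle : I • (⊤ : Submodule R M) ≤ (J • (⊤ : Submodule S M)).restrictScalars R := by
    refine Submodule.smul_le.mpr fun r hr m _ => ?_
    have := Submodule.smul_mem_smul (hIJ (Ideal.mem_map_of_mem _ hr)) (Submodule.mem_top (x := m))
    rwa [algebraMap_smul] at this
  have hI : I • (⊤ : Submodule R M) < ⊤ := lt_of_le_of_lt hle <| lt_top_iff_ne_top.mpr fun eq =>
    hJ.ne ((Submodule.restrictScalars_eq_top_iff R S M).mp eq)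
  obtain ⟨rs, rfl, hmem, hreg⟩ := (depthGE_iff_exists_isRegular hI).mp h
  have hmem' : ∀ s ∈ rs.map (algebraMap R S), s ∈ J := List.forall_mem_map.mpr fun r hr =>
    hIJ (Ideal.mem_map_of_mem _ (hmem r hr))
  refine (depthGE_iff_exists_isRegular hJ).mpr ⟨rs.map (algebraMap R S), List.length_map _, hmem',
    (isWeaklyRegular_map_algebraMap_iff S M rs).mpr hreg.toIsWeaklyRegular, fun eq => ?_⟩
  exact hJ.not_ge (eq.le.trans (Submodule.smul_mono_left (Ideal.span_le.mpr hmem')))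

theorem depthGE_quotient_of_quadratic (φ : R →+* S) {t : S}
    (hgen : ∀ s, ∃ a b, s = φ a + t * φ b) {J I' : Ideal S} (hJ : J ≤ I') (hI' : I' ≠ ⊤)
    (hII' : I.map φ ≤ I') {B : Ideal R} (hB : ∀ b, b ∈ B ↔ ∃ a, t * φ b - φ a ∈ J)
    (hcomap : DepthGE I (R ⧸ J.comap φ) d) (hdB : DepthGE I (R ⧸ B) d) :
    DepthGE I' (S ⧸ J) d := by
  algebraize [φ]
  have smul_one_eq (a : R) : a • (1 : S) = φ a := (Algebra.algebraMap_eq_smul_one a).symm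
  have smul_t_eq (b : R) : b • t = t * φ b := (Algebra.smul_def b t).trans (mul_comm _ _)
  let P : Submodule R S := J.restrictScalars R
  have hcolon_one : P.colon {1} = J.comap φ := by
    ext r
    rw [Submodule.mem_colon_singleton, smul_one_eq, Submodule.restrictScalars_mem, Ideal.mem_comap]
  have hcolon_t : (P ⊔ Submodule.span R {1}).colon {t} = B := by
    ext b
    simp_rw [Submodule.mem_colon_singleton, hB, sup_comm P, Submodule.mem_sup,
      Submodule.mem_span_singleton, exists_exists_eq_and, smul_one_eq, smul_t_eq,
      ← eq_sub_iff_add_eq', exists_eq_right, P, Submodule.restrictScalars_mem]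
  have hspan : Submodule.span R {1, t} = ⊤ := by
    refine eq_top_iff.mpr fun s _ => ?_
    obtain ⟨a, b, rfl⟩ := hgen s
    exact Submodule.mem_span_pair.mpr ⟨a, b, by rw [smul_one_eq, smul_t_eq]⟩
  have : Subsingleton (S ⧸ (P ⊔ Submodule.span R {1} ⊔ Submodule.span R {t})) := by
    rw [Submodule.Quotient.subsingleton_iff, sup_assoc, ← Submodule.span_insert, hspan,
      sup_top_eq]
  have hdepth : DepthGE I (S ⧸ P) d :=
    .quotient_of_colon 1 (hcolon_one ▸ hcomap)
      (.quotient_of_colon t (hcolon_t ▸ hdB) depthGE_of_subsingleton)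
  have : Module.Finite R S :=
    ⟨Submodule.fg_def.mpr ⟨{1, t}, Set.toFinite _, hspan⟩⟩
  exact (hdepth.congr (Submodule.Quotient.restrictScalarsEquiv R J)).of_algebra hII'
    (smul_top_quotient_lt_top hJ hI')

end Noetherian

end Depth

section LinearForms

open MvPolynomial RingTheory.Sequence Pointwise

universe u v

section Dimension

variable {R : Type u} [CommRing R]

theorem supportDim_quotient_add_length_le {M : Type v} [AddCommGroup M] [Module R M]
    [Module.Finite R M] {rs : List R} (h : IsWeaklyRegular M rs) :
    Module.supportDim R (M ⧸ Ideal.ofList rs • (⊤ : Submodule R M)) + rs.length ≤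
      Module.supportDim R M := by
  induction rs generalizing M with
  | nil =>
    rw [Ideal.ofList_nil, Submodule.bot_smul]
    simpa using (Module.supportDim_eq_of_equiv (Submodule.quotEquivOfEqBot ⊥ rfl)).le
  | cons x rs ih =>
    rw [isWeaklyRegular_cons_iff] at h
    rw [Module.supportDim_eq_of_equiv
      (Submodule.quotOfListConsSMulTopEquivQuotSMulTopInner M x _), List.length_cons,
      Nat.cast_succ, ← add_assoc]
    exact (add_le_add_left (ih h.2) 1).trans
      (Module.supportDim_quotSMulTop_succ_le_of_notMem_minimalPrimes
        fun _ => h.1.notMem_of_mem_minimalPrimes)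

theorem ringKrullDim_quotient_sup_ofList_add_length_le [IsNoetherianRing R] {I : Ideal R}
    {rs : List R} (h : IsWeaklyRegular (R ⧸ I) rs) :
    ringKrullDim (R ⧸ (I ⊔ Ideal.ofList rs)) + rs.length ≤ ringKrullDim (R ⧸ I) := by
  rw [← Module.supportDim_quotient_eq_ringKrullDim, ← Module.supportDim_quotient_eq_ringKrullDim,
    ← Module.supportDim_eq_of_equiv (quotientSMulTopEquiv (Ideal.ofList rs) I)]
  exact supportDim_quotient_add_length_le h

end Dimension

theorem isRegular_map_mk_iff {R : Type u} [CommRing R] {I : Ideal R} (rs : List R) :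
    IsRegular (R ⧸ I) (rs.map (Ideal.Quotient.mk I)) ↔ IsRegular (R ⧸ I) rs :=
  (AddEquiv.refl (R ⧸ I)).isRegular_congr <| List.forall₂_map_left_iff.mpr <|
    List.forall₂_same.mpr fun r _ => algebraMap_smul (R ⧸ I) r

section IdealOfVars

variable {σ : Type v} {K : Type u}

section CommRing

variable [CommRing K]

theorem X_mem_idealOfVars (a : σ) : (X a : MvPolynomial σ K) ∈ idealOfVars σ K :=
  Ideal.subset_span ⟨a, rfl⟩

theorem mem_idealOfVars_of_isHomogeneous_one {f : MvPolynomial σ K} (hf : f.IsHomogeneous 1) :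
    f ∈ idealOfVars σ K := by
  rw [← pow_one (idealOfVars σ K), mem_pow_idealOfVars_iff]
  intro u hu
  rw [Finsupp.degree_eq_weight_one]
  exact (hf (mem_support_iff.mp hu)).ge

variable (σ K) in
theorem idealOfVars_ne_top [Nontrivial K] : idealOfVars σ K ≠ ⊤ := by
  rw [Ideal.ne_top_iff_one, ← pow_one (idealOfVars σ K), mem_pow_idealOfVars_iff]
  exact fun h => by simpa using h 0 (by simp)

end CommRing

variable [Finite σ] [Field K] [Infinite K]

/-- Over an infinite field, the space of linear forms is not the union of its intersections with the
finitely many associated primes of `M`. -/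
theorem exists_linearForm_isSMulRegular {M : Type*} [AddCommGroup M] [Module (MvPolynomial σ K) M]
    [Module.Finite (MvPolynomial σ K) M] {r : MvPolynomial σ K} (hr : r ∈ idealOfVars σ K)
    (hreg : IsSMulRegular M r) : ∃ l : MvPolynomial σ K, l.IsHomogeneous 1 ∧ IsSMulRegular M l := by
  classical
  let V := homogeneousSubmodule σ K 1
  let linearPart (p : Ideal (MvPolynomial σ K)) : Subspace K V :=
    (p.restrictScalars K).comap V.subtype
  have hfin := associatedPrimes.finite (MvPolynomial σ K) M
  have hunion := biUnion_associatedPrimes_eq_compl_regular (MvPolynomial σ K) M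
  have hproper : ⊤ ∉ hfin.toFinset.image linearPart := by
    intro htop
    obtain ⟨p, hp, hpt⟩ := Finset.mem_image.mp htop
    have hle : idealOfVars σ K ≤ p := Ideal.span_le.mpr <| Set.range_subset_iff.mpr fun a =>
      (hpt.ge Submodule.mem_top : (⟨X a, isHomogeneous_X K a⟩ : V) ∈ linearPart p)
    exact hunion.le (Set.mem_biUnion (hfin.mem_toFinset.mp hp) (hle hr)) hreg
  obtain ⟨l, hl⟩ := (Set.ne_univ_iff_exists_notMem _).mp
    (Subspace.biUnion_ne_univ_of_top_notMem hproper)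
  refine ⟨l, l.2, not_not.mp fun hnl => hl ?_⟩
  obtain ⟨p, hp, hlp⟩ := Set.mem_iUnion₂.mp (hunion.ge hnl)
  exact Set.mem_biUnion (Finset.mem_image_of_mem linearPart (hfin.mem_toFinset.mpr hp)) hlp

theorem DepthGE.exists_linearForms_isRegular {d : ℕ} {M : Type max u v} [AddCommGroup M]
    [Module (MvPolynomial σ K) M] [Module.Finite (MvPolynomial σ K) M]
    (hM : idealOfVars σ K • (⊤ : Submodule (MvPolynomial σ K) M) < ⊤)
    (h : DepthGE (idealOfVars σ K) M d) :
    ∃ rs : List (MvPolynomial σ K),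
      rs.length = d ∧ (∀ r ∈ rs, r.IsHomogeneous 1) ∧ IsRegular M rs := by
  induction d generalizing M with
  | zero =>
    have : Nontrivial M := (Submodule.nontrivial_iff _).mp (nontrivial_of_lt _ _ hM)
    exact ⟨[], rfl, List.forall_mem_nil _, IsRegular.nil _ _⟩
  | succ d ih =>
    obtain ⟨rs, hlen, hmem, hreg⟩ := (depthGE_iff_exists_isRegular hM).mp (h.mono (by lia : 1 ≤ _))
    obtain ⟨r, rfl⟩ := List.length_eq_one_iff.mp hlen
    obtain ⟨l, hl, hlreg⟩ := exists_linearForm_isSMulRegular (hmem r List.mem_cons_self)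
      ((isRegular_cons_iff _ _ _).mp hreg).1
    obtain ⟨ls, rfl, hhom, hls⟩ := ih
      (smul_top_quotSMulTop_lt_top (mem_idealOfVars_of_isHomogeneous_one hl) hM)
      (h.quotSMulTop hlreg)
    exact ⟨l :: ls, rfl, List.forall_mem_cons.mpr ⟨hl, hhom⟩, hls.cons hlreg⟩

end IdealOfVars

theorem isCMIdeal_iff_depthGE {K : Type u} [Field K] [Infinite K] {n d : ℕ}
    {I : Ideal (MvPolynomial (Fin n) K)} (hI : I ≤ idealOfVars (Fin n) K)
    (hd : ringKrullDim (MvPolynomial (Fin n) K ⧸ I) = d) :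
    IsCMIdeal I ↔ DepthGE (idealOfVars (Fin n) K) (MvPolynomial (Fin n) K ⧸ I) d := by
  have hlt := smul_top_quotient_lt_top hI (idealOfVars_ne_top (Fin n) K)
  constructor
  · rintro ⟨e, he, θ, ⟨hθ, -⟩, hreg⟩
    obtain rfl : e = d := by exact_mod_cast he.symm.trans hd
    exact (depthGE_iff_exists_isRegular hlt).mpr ⟨List.ofFn θ, List.length_ofFn,
      (List.forall_mem_ofFn_iff).mpr fun a => mem_idealOfVars_of_isHomogeneous_one (hθ a),
      (isRegular_map_mk_iff _).mp hreg⟩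
  · intro h
    obtain ⟨rs, rfl, hhom, hreg⟩ := h.exists_linearForms_isRegular hlt
    have hdim := ringKrullDim_quotient_sup_ofList_add_length_le hreg.toIsWeaklyRegular
    refine ⟨rs.length, hd, rs.get, ⟨fun a => hhom _ (rs.get_mem a), ?_⟩, ?_⟩
    · rw [Set.range_list_get]
      refine ENat.WithBot.add_le_add_natCast_right_iff.mp (hdim.trans ?_)
      rw [hd, zero_add]
    · rwa [List.ofFn_get, isRegular_map_mk_iff]

end LinearForms

section StanleyReisner

open MvPolynomial

universe u v

variable {σ : Type v} {K : Type u} [CommRing K]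

variable (K) in
/-- The Stanley–Reisner ideal of a simplicial complex with vertices indexed by `σ`. Elements of `σ`
that are not vertices are allowed; the corresponding variables lie in the ideal. -/
noncomputable def stanleyReisnerIdeal (Δ : Set (Finset σ)) : Ideal (MvPolynomial σ K) :=
  Ideal.span ((fun F => ∏ a ∈ F, X a) '' Δᶜ)

variable (K) in
/-- The evaluation setting all variables outside `F` to zero. For the faces `F` of a simplicial
complex, these endomorphisms jointly detect the Stanley–Reisner ideal. -/
noncomputable def restrictVars (F : Finset σ) : MvPolynomial σ K →ₐ[K] MvPolynomial σ K :=
  (rename Subtype.val).comp (killCompl (Subtype.val_injective (p := (· ∈ F))))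

section restrictVars

variable {F G : Finset σ} {a : σ}

theorem killCompl_X_of_notMem (h : a ∉ F) :
    killCompl (R := K) (Subtype.val_injective (p := (· ∈ F))) (X a) = 0 := by
  simp [killCompl, h]

theorem restrictVars_X_of_mem (h : a ∈ F) : restrictVars K F (X a) = X a := by
  have := killCompl_rename_app (R := K) (Subtype.val_injective (p := (· ∈ F))) (X ⟨a, h⟩)
  rw [rename_X] at this
  rw [restrictVars, AlgHom.comp_apply, this, rename_X]

theorem restrictVars_X_of_notMem (h : a ∉ F) : restrictVars K F (X a) = 0 := by
  rw [restrictVars, AlgHom.comp_apply, killCompl_X_of_notMem h, map_zero]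

theorem restrictVars_restrictVars_of_subset (h : F ⊆ G) (f : MvPolynomial σ K) :
    restrictVars K F (restrictVars K G f) = restrictVars K F f := by
  have : (restrictVars K F).comp (restrictVars K G) = restrictVars K F := by
    refine algHom_ext fun c => ?_
    rw [AlgHom.comp_apply]
    by_cases hc : c ∈ G
    · rw [restrictVars_X_of_mem hc]
    · rw [restrictVars_X_of_notMem hc, restrictVars_X_of_notMem (mt (@h c) hc), map_zero]
  exact DFunLike.congr_fun this f

theorem restrictVars_monomial_of_subset {u : σ →₀ ℕ} (h : u.support ⊆ F) (c : K) :
    restrictVars K F (monomial u c) = monomial u c := by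
  rw [monomial_eq, map_mul, algHom_C, algebraMap_eq, Finsupp.prod, map_prod]
  exact congrArg _ (Finset.prod_congr rfl fun a ha => by rw [map_pow, restrictVars_X_of_mem (h ha)])

theorem restrictVars_monomial_of_not_subset {u : σ →₀ ℕ} (h : ¬u.support ⊆ F) (c : K) :
    restrictVars K F (monomial u c) = 0 := by
  obtain ⟨a, ha, haF⟩ := Finset.not_subset.mp h
  rw [monomial_eq, map_mul, Finsupp.prod, map_prod, Finset.prod_eq_zero ha, mul_zero]
  rw [map_pow, restrictVars_X_of_notMem haF, zero_pow (Finsupp.mem_support_iff.mp ha)]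

theorem coeff_restrictVars {u : σ →₀ ℕ} (hu : u.support ⊆ F) (f : MvPolynomial σ K) :
    coeff u (restrictVars K F f) = coeff u f := by
  induction f using MvPolynomial.induction_on' with
  | add p q hp hq => rw [map_add, coeff_add, coeff_add, hp, hq]
  | monomial v c =>
    by_cases hv : v.support ⊆ F
    · rw [restrictVars_monomial_of_subset hv]
    · classical
      rw [restrictVars_monomial_of_not_subset hv, coeff_zero, coeff_monomial,
        if_neg (show v ≠ u from fun h => hv (h ▸ hu))]

theorem restrictVars_eq_zero_iff {f : MvPolynomial σ K} :
    restrictVars K F f = 0 ↔ ∀ u ∈ f.support, ¬u.support ⊆ F := by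
  constructor
  · intro h u hu huF
    rw [mem_support_iff, ← coeff_restrictVars huF, h, coeff_zero] at hu
    exact hu rfl
  · intro h
    rw [f.as_sum, map_sum]
    exact Finset.sum_eq_zero fun u hu => restrictVars_monomial_of_not_subset (h u hu) _

theorem X_dvd_of_restrictVars_erase_eq_zero [DecidableEq σ] {f : MvPolynomial σ K}
    (h : restrictVars K (f.vars.erase a) f = 0) : X a ∣ f := by
  rw [← Ideal.mem_span_singleton, ← Set.image_singleton, mem_ideal_span_X_image]
  refine fun u hu => ⟨a, rfl, fun hua => restrictVars_eq_zero_iff.mp h u hu fun c hc => ?_⟩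
  refine Finset.mem_erase.mpr ⟨?_, (mem_vars_iff_mem_support c).mpr ⟨u, hu, hc⟩⟩
  rintro rfl
  exact Finsupp.mem_support_iff.mp hc hua

end restrictVars

section Ideal

variable {Δ Δ' : Set (Finset σ)} {F : Finset σ} {a : σ}

theorem prod_X_mem_stanleyReisnerIdeal (h : F ∉ Δ) :
    ∏ a ∈ F, X a ∈ stanleyReisnerIdeal K Δ :=
  Ideal.subset_span (Set.mem_image_of_mem _ h)

theorem stanleyReisnerIdeal_anti (h : Δ' ⊆ Δ) :
    stanleyReisnerIdeal K Δ ≤ stanleyReisnerIdeal K Δ' :=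
  Ideal.span_mono (Set.image_mono (Set.compl_subset_compl.mpr h))

theorem stanleyReisnerIdeal_le_idealOfVars (h : ∅ ∈ Δ) :
    stanleyReisnerIdeal K Δ ≤ idealOfVars σ K := by
  refine Ideal.span_le.mpr ?_
  rintro _ ⟨F, hF, rfl⟩
  obtain ⟨a, ha⟩ := Finset.nonempty_iff_ne_empty.mpr (ne_of_mem_of_not_mem h hF).symm
  exact Ideal.mem_of_dvd _ (Finset.dvd_prod_of_mem _ ha) (X_mem_idealOfVars a)

theorem stanleyReisnerIdeal_le_ker (hΔ : IsLowerSet Δ) (hF : F ∈ Δ) {A : Type*} [CommRing A]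
    (f : MvPolynomial σ K →+* A) (hf : ∀ a ∉ F, f (X a) = 0) :
    stanleyReisnerIdeal K Δ ≤ RingHom.ker f := by
  refine Ideal.span_le.mpr ?_
  rintro _ ⟨G, hG, rfl⟩
  obtain ⟨a, haG, haF⟩ := Finset.not_subset.mp fun h : G ⊆ F => hG (hΔ h hF)
  exact (map_prod f _ _).trans (Finset.prod_eq_zero haG (hf a haF))

theorem prod_X_support_dvd_monomial (u : σ →₀ ℕ) (c : K) :
    ∏ a ∈ u.support, (X a : MvPolynomial σ K) ∣ monomial u c := by
  rw [monomial_eq, Finsupp.prod]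
  exact (Finset.prod_dvd_prod_of_dvd _ _ fun a ha =>
    dvd_pow_self _ (Finsupp.mem_support_iff.mp ha)).mul_left _

theorem mem_stanleyReisnerIdeal_iff (hΔ : IsLowerSet Δ) {f : MvPolynomial σ K} :
    f ∈ stanleyReisnerIdeal K Δ ↔ ∀ F ∈ Δ, restrictVars K F f = 0 := by
  refine ⟨fun hf F hF => stanleyReisnerIdeal_le_ker hΔ hF (restrictVars K F).toRingHom
    (fun a => restrictVars_X_of_notMem) hf, fun h => ?_⟩
  rw [f.as_sum]
  refine Ideal.sum_mem _ fun u hu => Ideal.mem_of_dvd _ (prod_X_support_dvd_monomial u _)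
    (prod_X_mem_stanleyReisnerIdeal fun hF => ?_)
  exact restrictVars_eq_zero_iff.mp (h _ hF) u hu subset_rfl

theorem X_mem_stanleyReisnerIdeal (hΔ : IsLowerSet Δ) (ha : ∀ F ∈ Δ, a ∉ F) :
    X a ∈ stanleyReisnerIdeal K Δ :=
  (mem_stanleyReisnerIdeal_iff hΔ).mpr fun F hF => restrictVars_X_of_notMem (ha F hF)

theorem isLowerSet_sep_notMem (hΔ : IsLowerSet Δ) (a : σ) : IsLowerSet {F ∈ Δ | a ∉ F} :=
  fun _ _ h hF => ⟨hΔ h hF.1, fun ha => hF.2 (h ha)⟩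

theorem stanleyReisnerIdeal_sup_span_X (hΔ : IsLowerSet Δ) (a : σ) :
    stanleyReisnerIdeal K Δ ⊔ Ideal.span {X a} = stanleyReisnerIdeal K {F ∈ Δ | a ∉ F} := by
  apply le_antisymm
  · refine sup_le (stanleyReisnerIdeal_anti fun F hF => hF.1) ?_
    rw [Ideal.span_singleton_le_iff_mem]
    exact X_mem_stanleyReisnerIdeal (isLowerSet_sep_notMem hΔ a) fun F hF => hF.2
  · refine Ideal.span_le.mpr ?_
    rintro _ ⟨F, hF, rfl⟩
    by_cases ha : a ∈ F
    · exact Ideal.mem_sup_right (Ideal.mem_span_singleton.mpr (Finset.dvd_prod_of_mem _ ha))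
    · exact Ideal.mem_sup_left (prod_X_mem_stanleyReisnerIdeal fun h => hF ⟨h, ha⟩)

section Cone

variable [DecidableEq σ]

theorem mem_stanleyReisnerIdeal_of_X_mul_mem (hΔ : IsLowerSet Δ) (ha : ∀ F ∈ Δ, insert a F ∈ Δ)
    {f : MvPolynomial σ K} (hf : X a * f ∈ stanleyReisnerIdeal K Δ) :
    f ∈ stanleyReisnerIdeal K Δ := by
  rw [mem_stanleyReisnerIdeal_iff hΔ] at hf ⊢
  intro F hF
  have h := hf _ (ha F hF)
  rw [map_mul, restrictVars_X_of_mem (Finset.mem_insert_self a F)] at h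
  rw [← restrictVars_restrictVars_of_subset (Finset.subset_insert a F),
    isRegular_X.left.mul_left_eq_zero_iff.mp h, map_zero]

theorem depthGE_stanleyReisner_cone [Nontrivial K] [IsNoetherianRing K] [Finite σ]
    (hΔ : IsLowerSet Δ) (h₀ : ∅ ∈ Δ) (ha : ∀ F ∈ Δ, insert a F ∈ Δ) {d : ℕ}
    (h : DepthGE (idealOfVars σ K)
      (MvPolynomial σ K ⧸ stanleyReisnerIdeal K {F ∈ Δ | a ∉ F}) d) :
    DepthGE (idealOfVars σ K) (MvPolynomial σ K ⧸ stanleyReisnerIdeal K Δ) (d + 1) := by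
  rw [← stanleyReisnerIdeal_sup_span_X hΔ a] at h
  exact .succ_of_quotient_sup_span (stanleyReisnerIdeal_le_idealOfVars h₀) (idealOfVars_ne_top σ K)
    (X_mem_idealOfVars a) (fun _ => mem_stanleyReisnerIdeal_of_X_mul_mem hΔ ha) h

end Cone

end Ideal

section Dimension

variable {K : Type u} [Field K]

theorem ringKrullDim_quotient_le_of_forall_isPrime {R : Type*} [CommRing R] {I : Ideal R}
    {d : WithBot ℕ∞} (h : ∀ P : Ideal R, P.IsPrime → I ≤ P → ringKrullDim (R ⧸ P) ≤ d) :
    ringKrullDim (R ⧸ I) ≤ d := by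
  rw [ringKrullDim_quotient, Order.krullDim_eq_iSup_coheight]
  refine iSup_le fun P => le_trans ?_ (h P.1.asIdeal P.1.isPrime P.2)
  rw [Order.coheight_eq_krullDim_Ici, ringKrullDim_quotient]
  exact Order.krullDim_le_of_strictMono
    (fun Q => (⟨Q.1.1, Q.2⟩ : PrimeSpectrum.zeroLocus (P.1.asIdeal : Set R))) fun _ _ h => h

theorem ringKrullDim_mvPolynomial_finset (F : Finset σ) :
    ringKrullDim (MvPolynomial F K) = F.card := by
  rw [MvPolynomial.ringKrullDim_of_isNoetherianRing, ringKrullDim_eq_zero_of_field, zero_add,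
    Nat.card_eq_fintype_card, Fintype.card_coe]

theorem ringKrullDim_quotient_le_card {I : Ideal (MvPolynomial σ K)} {F : Finset σ}
    (h : ∀ a ∉ F, X a ∈ I) : ringKrullDim (MvPolynomial σ K ⧸ I) ≤ F.card := by
  have hmk : (Ideal.Quotient.mkₐ K I).comp (restrictVars K F) = Ideal.Quotient.mkₐ K I := by
    refine algHom_ext fun a => ?_
    by_cases ha : a ∈ F
    · rw [AlgHom.comp_apply, restrictVars_X_of_mem ha]
    · rw [AlgHom.comp_apply, restrictVars_X_of_notMem ha, map_zero]
      exact (Ideal.Quotient.eq_zero_iff_mem.mpr (h a ha)).symm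
  rw [← ringKrullDim_mvPolynomial_finset (K := K)]
  refine ringKrullDim_le_of_surjective
    ((Ideal.Quotient.mkₐ K I).comp (rename Subtype.val)).toRingHom fun x => ?_
  obtain ⟨f, rfl⟩ := Ideal.Quotient.mk_surjective x
  exact ⟨_, DFunLike.congr_fun hmk f⟩

variable {Δ : Set (Finset σ)}

theorem card_le_ringKrullDim_stanleyReisner (hΔ : IsLowerSet Δ) {F : Finset σ} (hF : F ∈ Δ) :
    (F.card : WithBot ℕ∞) ≤ ringKrullDim (MvPolynomial σ K ⧸ stanleyReisnerIdeal K Δ) := by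
  rw [← ringKrullDim_mvPolynomial_finset (K := K)]
  let f := (killCompl (R := K) (Subtype.val_injective (p := (· ∈ F)))).toRingHom
  refine ringKrullDim_le_of_surjective (Ideal.Quotient.lift _ f
    (stanleyReisnerIdeal_le_ker hΔ hF f fun a => killCompl_X_of_notMem)) ?_
  exact Ideal.Quotient.lift_surjective_of_surjective _ _
    fun g => ⟨rename Subtype.val g, killCompl_rename_app _ g⟩

theorem ringKrullDim_stanleyReisner_le [Finite σ] {d : ℕ} (hd : ∀ F ∈ Δ, F.card ≤ d) :
    ringKrullDim (MvPolynomial σ K ⧸ stanleyReisnerIdeal K Δ) ≤ d := by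
  refine ringKrullDim_quotient_le_of_forall_isPrime fun P hP hle => ?_
  let F : Finset σ := (Set.toFinite {a | X a ∉ P}).toFinset
  have hF : ∀ a, a ∈ F ↔ X a ∉ P := fun a => Set.Finite.mem_toFinset _
  have hFΔ : F ∈ Δ := by
    by_contra hF'
    obtain ⟨a, ha, haP⟩ := hP.prod_mem_iff.mp (hle (prod_X_mem_stanleyReisnerIdeal hF'))
    exact (hF a).mp ha haP
  refine (ringKrullDim_quotient_le_card fun a ha => not_not.mp (mt (hF a).mpr ha)).trans ?_
  exact_mod_cast hd F hFΔ

end Dimension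

end StanleyReisner

section EdgeContraction

open MvPolynomial

universe u v

variable {σ : Type v} {K : Type u} [CommRing K]

theorem algHom_ext_of_pair (a b : σ) {A : Type*} [CommRing A] [Algebra K A]
    {f g : MvPolynomial σ K →ₐ[K] A} (ha : f (X a) = g (X a)) (hb : f (X b) = g (X b))
    (hc : ∀ c, c ≠ a → c ≠ b → f (X c) = g (X c)) : f = g := by
  refine algHom_ext fun c => ?_
  obtain rfl | hca := eq_or_ne c a
  · exact ha
  obtain rfl | hcb := eq_or_ne c b
  · exact hb
  exact hc c hca hcb

variable [DecidableEq σ] {a b c : σ}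

section symmMap

variable (K) in
/-- The endomorphism `φ` of the polynomial ring sending `x_a` and `x_b` to the elementary symmetric
polynomials `x_a x_b` and `x_a + x_b`, and fixing all other variables. Its range consists of the
polynomials symmetric in `x_a` and `x_b`. -/
noncomputable def symmMap (a b : σ) : MvPolynomial σ K →ₐ[K] MvPolynomial σ K :=
  aeval fun c => if c = a then X a * X b else if c = b then X a + X b else X c

theorem symmMap_X_left : symmMap K a b (X a) = X a * X b := by simp [symmMap]

theorem symmMap_X_right (hab : a ≠ b) : symmMap K a b (X b) = X a + X b := by
  simp [symmMap, hab.symm]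

theorem symmMap_X_of_ne (ha : c ≠ a) (hb : c ≠ b) : symmMap K a b (X c) = X c := by
  simp [symmMap, ha, hb]

theorem symmMap_prod_X {F : Finset σ} (ha : a ∉ F) (hb : b ∉ F) :
    symmMap K a b (∏ c ∈ F, X c) = ∏ c ∈ F, X c := by
  rw [map_prod]
  exact Finset.prod_congr rfl fun c hc =>
    symmMap_X_of_ne (ne_of_mem_of_not_mem hc ha) (ne_of_mem_of_not_mem hc hb)

theorem rename_swap_symmMap (hab : a ≠ b) (f : MvPolynomial σ K) :
    rename (Equiv.swap a b) (symmMap K a b f) = symmMap K a b f := by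
  have : (rename (Equiv.swap a b)).comp (symmMap K a b) = symmMap K a b := by
    refine algHom_ext_of_pair a b ?_ ?_ fun c hca hcb => ?_
    · simp [symmMap_X_left, mul_comm]
    · simp [symmMap_X_right hab, add_comm]
    · simp [symmMap_X_of_ne hca hcb, Equiv.swap_apply_of_ne_of_ne hca hcb]
  exact DFunLike.congr_fun this f

theorem map_symmMap_idealOfVars_le (hab : a ≠ b) :
    (idealOfVars σ K).map (symmMap K a b).toRingHom ≤ idealOfVars σ K := by
  rw [Ideal.map_le_iff_le_comap, idealOfVars, Ideal.span_le, Set.range_subset_iff]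
  intro c
  change symmMap K a b (X c) ∈ idealOfVars σ K
  obtain rfl | hca := eq_or_ne c a
  · rw [symmMap_X_left]
    exact Ideal.mul_mem_right _ _ (X_mem_idealOfVars c)
  obtain rfl | hcb := eq_or_ne c b
  · rw [symmMap_X_right hab]
    exact add_mem (X_mem_idealOfVars a) (X_mem_idealOfVars c)
  rw [symmMap_X_of_ne hca hcb]
  exact X_mem_idealOfVars c

theorem exists_eq_symmMap_add_X_mul_symmMap (hab : a ≠ b) (s : MvPolynomial σ K) :
    ∃ f g, s = symmMap K a b f + X a * symmMap K a b g := by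
  induction s using MvPolynomial.induction_on with
  | C r => exact ⟨C r, 0, by simp [symmMap]⟩
  | add p q hp hq =>
    obtain ⟨f, g, rfl⟩ := hp
    obtain ⟨f', g', rfl⟩ := hq
    exact ⟨f + f', g + g', by simp only [map_add]; ring⟩
  | mul_X p c hp =>
    obtain ⟨f, g, rfl⟩ := hp
    obtain rfl | hca := eq_or_ne c a
    -- `x_a² = (x_a + x_b) x_a - x_a x_b`
    · refine ⟨-(X c * g), f + X b * g, ?_⟩
      simp only [map_add, map_mul, map_neg, symmMap_X_left, symmMap_X_right hab]
      ring
    obtain rfl | hcb := eq_or_ne c b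
    · refine ⟨f * X c + X a * g, -f, ?_⟩
      simp only [map_add, map_mul, map_neg, symmMap_X_left, symmMap_X_right hab]
      ring
    · refine ⟨f * X c, g * X c, ?_⟩
      simp only [map_mul, symmMap_X_of_ne hca hcb]
      ring

section restrictVars

variable {F : Finset σ}

theorem restrictVars_symmMap_of_mem (hab : a ≠ b) (ha : a ∈ F) (hb : b ∈ F)
    (f : MvPolynomial σ K) :
    restrictVars K F (symmMap K a b f) = symmMap K a b (restrictVars K F f) := by
  have : (restrictVars K F).comp (symmMap K a b) = (symmMap K a b).comp (restrictVars K F) := by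
    refine algHom_ext_of_pair a b ?_ ?_ fun c hca hcb => ?_
    · simp [symmMap_X_left, restrictVars_X_of_mem, ha, hb]
    · simp [symmMap_X_right hab, restrictVars_X_of_mem, ha, hb]
    · by_cases hc : c ∈ F
      · simp [symmMap_X_of_ne hca hcb, restrictVars_X_of_mem hc]
      · simp [symmMap_X_of_ne hca hcb, restrictVars_X_of_notMem hc]
  exact DFunLike.congr_fun this f

theorem restrictVars_symmMap_of_notMem (hab : a ≠ b) (ha : a ∉ F) (f : MvPolynomial σ K) :
    restrictVars K F (symmMap K a b f) = restrictVars K F f := by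
  have : (restrictVars K F).comp (symmMap K a b) = restrictVars K F := by
    refine algHom_ext_of_pair a b ?_ ?_ fun c hca hcb => ?_
    · simp [symmMap_X_left, restrictVars_X_of_notMem ha]
    · simp [symmMap_X_right hab, restrictVars_X_of_notMem ha]
    · simp [symmMap_X_of_ne hca hcb]
  exact DFunLike.congr_fun this f

theorem restrictVars_insert_erase_symmMap (hab : a ≠ b) (ha : a ∉ F) (hb : b ∈ F)
    (f : MvPolynomial σ K) :
    restrictVars K (insert a (F.erase b)) (symmMap K a b f) =
      rename (Equiv.swap a b) (restrictVars K F f) := by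
  have hb' : b ∉ insert a (F.erase b) := by simp [hab.symm]
  have : (restrictVars K (insert a (F.erase b))).comp (symmMap K a b) =
      (rename (Equiv.swap a b)).comp (restrictVars K F) := by
    refine algHom_ext_of_pair a b ?_ ?_ fun c hca hcb => ?_
    · simp [symmMap_X_left, restrictVars_X_of_notMem hb', restrictVars_X_of_notMem ha]
    · simp [symmMap_X_right hab, restrictVars_X_of_notMem hb', restrictVars_X_of_mem hb,
        restrictVars_X_of_mem (Finset.mem_insert_self a (F.erase b))]
    · rw [AlgHom.comp_apply, AlgHom.comp_apply, symmMap_X_of_ne hca hcb]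
      by_cases hc : c ∈ F
      · rw [restrictVars_X_of_mem hc, restrictVars_X_of_mem (by simp [hcb, hc]), rename_X,
          Equiv.swap_apply_of_ne_of_ne hca hcb]
      · rw [restrictVars_X_of_notMem hc, restrictVars_X_of_notMem (by simp [hca, hc]), map_zero]
  exact DFunLike.congr_fun this f

end restrictVars

theorem symmMap_injective [IsDomain K] (hab : a ≠ b) : Function.Injective (symmMap K a b) := by
  rw [injective_iff_map_eq_zero]
  intro f
  induction h : f.totalDegree using Nat.strong_induction_on generalizing f with
  | _ N ih =>
    intro hf
    obtain ⟨g, rfl⟩ : X a ∣ f := by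
      refine X_dvd_of_restrictVars_erase_eq_zero ?_
      rw [← restrictVars_symmMap_of_notMem hab (Finset.notMem_erase _ _), hf, map_zero]
    by_cases hg : g = 0
    · rw [hg, mul_zero]
    rw [map_mul, symmMap_X_left] at hf
    rw [totalDegree_mul_of_isDomain (X_ne_zero a) hg, totalDegree_X] at h
    rw [ih g.totalDegree (by lia) g rfl
      ((mul_eq_zero.mp hf).resolve_left (mul_ne_zero (X_ne_zero a) (X_ne_zero b))), mul_zero]

theorem eq_zero_of_X_mul_symmMap_eq_symmMap [IsDomain K] (hab : a ≠ b) {f g : MvPolynomial σ K}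
    (h : X a * symmMap K a b g = symmMap K a b f) : g = 0 := by
  have hswap : X b * symmMap K a b g = symmMap K a b f := by
    simpa [rename_swap_symmMap hab] using congrArg (rename (Equiv.swap a b)) h
  have hmul : (X a - X b) * symmMap K a b g = 0 := by rw [sub_mul, h, hswap, sub_self]
  have hX : (X a - X b : MvPolynomial σ K) ≠ 0 := sub_ne_zero.mpr fun h => hab (X_injective h)
  exact (map_eq_zero_iff _ (symmMap_injective hab)).mp ((mul_eq_zero.mp hmul).resolve_left hX)

end symmMap

section FaceSets

/-- The star of a face `E` of `Δ`. -/
def faceStar (Δ : Set (Finset σ)) (E : Finset σ) : Set (Finset σ) :=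
  {F | F ∪ E ∈ Δ}

/-- The link of `Δ` with respect to `E`, for vertices indexed by an arbitrary type. -/
def faceLink (Δ : Set (Finset σ)) (E : Finset σ) : Set (Finset σ) :=
  {F | Disjoint F E ∧ F ∪ E ∈ Δ}

/-- The contraction of a simplicial complex `Δ` that replaces the vertex `a` by `b`, for vertices
indexed by an arbitrary type. A set avoiding `a` is a face of it if it is a face of `Δ`, or becomes
one when `b` is traded back for `a`. -/
def edgeContraction (Δ : Set (Finset σ)) (a b : σ) : Set (Finset σ) :=
  {F | a ∉ F ∧ (F ∈ Δ ∨ insert a (F.erase b) ∈ Δ)}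

variable {Δ : Set (Finset σ)}

theorem isLowerSet_faceStar (hΔ : IsLowerSet Δ) (E : Finset σ) : IsLowerSet (faceStar Δ E) :=
  fun _ _ h hF => hΔ (Finset.union_subset_union_left h) hF

theorem isLowerSet_edgeContraction (hΔ : IsLowerSet Δ) : IsLowerSet (edgeContraction Δ a b) :=
  fun _ _ h ⟨ha, hF⟩ => ⟨fun haG => ha (h haG), hF.imp (fun hF => hΔ h hF)
    fun hF => hΔ (Finset.insert_subset_insert a (Finset.erase_subset_erase b h)) hF⟩

theorem insert_mem_faceStar {E F : Finset σ} (ha : a ∈ E) (hF : F ∈ faceStar Δ E) :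
    insert a F ∈ faceStar Δ E := by
  rw [faceStar, Set.mem_ofPred_eq, Finset.insert_union, Finset.insert_eq_self.mpr
    (Finset.mem_union_right F ha)]
  exact hF

theorem sep_sep_faceStar_pair :
    {F ∈ {F ∈ faceStar Δ {a, b} | a ∉ F} | b ∉ F} = faceLink Δ {a, b} := by
  ext F
  simp only [faceStar, faceLink, Set.mem_ofPred_eq, Finset.disjoint_insert_right,
    Finset.disjoint_singleton_right]
  tauto

/-- The star of an edge is a cone with apex `a` over a cone with apex `b` over the link. -/
theorem depthGE_stanleyReisner_faceStar [Nontrivial K] [IsNoetherianRing K] [Finite σ]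
    (hΔ : IsLowerSet Δ) (hab : a ≠ b) (hE : {a, b} ∈ Δ) {d : ℕ}
    (h : DepthGE (idealOfVars σ K)
      (MvPolynomial σ K ⧸ stanleyReisnerIdeal K (faceLink Δ {a, b})) d) :
    DepthGE (idealOfVars σ K)
      (MvPolynomial σ K ⧸ stanleyReisnerIdeal K (faceStar Δ {a, b})) (d + 2) := by
  have hstar := isLowerSet_faceStar hΔ {a, b}
  have h₀ : ∅ ∈ faceStar Δ {a, b} := by rwa [faceStar, Set.mem_ofPred_eq, Finset.empty_union]
  refine depthGE_stanleyReisner_cone hstar h₀ (a := a)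
    (fun F => insert_mem_faceStar (by simp)) ?_
  refine depthGE_stanleyReisner_cone (isLowerSet_sep_notMem hstar a) ⟨h₀, Finset.notMem_empty a⟩
    (a := b) (fun F hF => ⟨insert_mem_faceStar (by simp) hF.1, by simpa [hab] using hF.2⟩) ?_
  rwa [sep_sep_faceStar_pair]

end FaceSets

variable {Δ : Set (Finset σ)}

theorem symmMap_X_mul_mem_stanleyReisnerIdeal_iff [IsDomain K] (hΔ : IsLowerSet Δ) (hab : a ≠ b)
    {f : MvPolynomial σ K} : symmMap K a b (X a * f) ∈ stanleyReisnerIdeal K Δ ↔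
      f ∈ stanleyReisnerIdeal K (faceStar Δ {a, b}) := by
  rw [mem_stanleyReisnerIdeal_iff hΔ, mem_stanleyReisnerIdeal_iff (isLowerSet_faceStar hΔ _)]
  constructor
  · intro h F hF
    have h' := h _ hF
    rw [restrictVars_symmMap_of_mem hab (by simp) (by simp),
      map_eq_zero_iff _ (symmMap_injective hab), map_mul, restrictVars_X_of_mem (by simp)] at h'
    rw [← restrictVars_restrictVars_of_subset Finset.subset_union_left,
      isRegular_X.left.mul_left_eq_zero_iff.mp h', map_zero]
  · intro h F hF
    rw [map_mul, symmMap_X_left, map_mul, map_mul]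
    by_cases ha : a ∈ F
    · by_cases hb : b ∈ F
      · have hstar : F ∈ faceStar Δ {a, b} := by
          rwa [faceStar, Set.mem_ofPred_eq, Finset.union_eq_left.mpr (by grind)]
        rw [restrictVars_symmMap_of_mem hab ha hb, h F hstar, map_zero, mul_zero]
      · rw [restrictVars_X_of_notMem hb, mul_zero, zero_mul]
    · rw [restrictVars_X_of_notMem ha, zero_mul, zero_mul]

theorem colon_comap_symmMap_stanleyReisnerIdeal [IsDomain K] (hΔ : IsLowerSet Δ) (hab : a ≠ b) :
    ((stanleyReisnerIdeal K Δ).comap (symmMap K a b).toRingHom).colon {X a} =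
      stanleyReisnerIdeal K (faceStar Δ {a, b}) := by
  ext f
  rw [Submodule.mem_colon_singleton, smul_eq_mul, mul_comm]
  exact symmMap_X_mul_mem_stanleyReisnerIdeal_iff hΔ hab

theorem comap_symmMap_stanleyReisnerIdeal_le (hΔ : IsLowerSet Δ) (hab : a ≠ b) :
    (stanleyReisnerIdeal K Δ).comap (symmMap K a b).toRingHom ≤
      stanleyReisnerIdeal K (edgeContraction Δ a b) := by
  intro f hf
  have hres := (mem_stanleyReisnerIdeal_iff hΔ).mp (Ideal.mem_comap.mp hf)
  change ∀ F ∈ Δ, restrictVars K F (symmMap K a b f) = 0 at hres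
  rw [mem_stanleyReisnerIdeal_iff (isLowerSet_edgeContraction hΔ)]
  rintro F ⟨ha, hF⟩
  by_cases hFΔ : F ∈ Δ
  · rw [← restrictVars_symmMap_of_notMem hab ha, hres F hFΔ]
  have hins := hF.resolve_left hFΔ
  have hb : b ∈ F := by
    by_contra hb
    rw [Finset.erase_eq_of_notMem hb] at hins
    exact hFΔ (hΔ (Finset.subset_insert a F) hins)
  have h := hres _ hins
  rw [restrictVars_insert_erase_symmMap hab ha hb] at h
  exact (map_eq_zero_iff _ (rename_injective _ (Equiv.swap a b).injective)).mp h

theorem symmMap_prod_X_mem_stanleyReisnerIdeal (hab : a ≠ b) {F : Finset σ} (ha : a ∉ F)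
    (hF : F ∉ edgeContraction Δ a b) :
    symmMap K a b (∏ c ∈ F, X c) ∈ stanleyReisnerIdeal K Δ := by
  have hFΔ : F ∉ Δ := fun h => hF ⟨ha, .inl h⟩
  have hins : insert a (F.erase b) ∉ Δ := fun h => hF ⟨ha, .inr h⟩
  have ha' : a ∉ F.erase b := fun h => ha (Finset.mem_of_mem_erase h)
  by_cases hb : b ∈ F
  · rw [← Finset.mul_prod_erase F X hb, map_mul, symmMap_X_right hab,
      symmMap_prod_X ha' (Finset.notMem_erase b F), add_mul, ← Finset.prod_insert ha',
      Finset.mul_prod_erase F X hb]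
    exact add_mem (prod_X_mem_stanleyReisnerIdeal hins) (prod_X_mem_stanleyReisnerIdeal hFΔ)
  · rw [symmMap_prod_X ha hb]
    exact prod_X_mem_stanleyReisnerIdeal hFΔ

theorem comap_symmMap_stanleyReisnerIdeal_sup_span_X (hΔ : IsLowerSet Δ) (hab : a ≠ b) :
    (stanleyReisnerIdeal K Δ).comap (symmMap K a b).toRingHom ⊔ Ideal.span {X a} =
      stanleyReisnerIdeal K (edgeContraction Δ a b) := by
  apply le_antisymm
  · refine sup_le (comap_symmMap_stanleyReisnerIdeal_le hΔ hab) ?_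
    rw [Ideal.span_singleton_le_iff_mem]
    exact X_mem_stanleyReisnerIdeal (isLowerSet_edgeContraction hΔ) fun F hF => hF.1
  · refine Ideal.span_le.mpr ?_
    rintro _ ⟨F, hF, rfl⟩
    by_cases ha : a ∈ F
    · exact Ideal.mem_sup_right (Ideal.mem_span_singleton.mpr (Finset.dvd_prod_of_mem _ ha))
    · exact Ideal.mem_sup_left (symmMap_prod_X_mem_stanleyReisnerIdeal hab ha hF)

theorem mem_stanleyReisnerIdeal_faceStar_of_X_mul_symmMap_sub_mem [IsDomain K]
    (hΔ : IsLowerSet Δ) (hab : a ≠ b) {f g : MvPolynomial σ K}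
    (h : X a * symmMap K a b g - symmMap K a b f ∈ stanleyReisnerIdeal K Δ) :
    g ∈ stanleyReisnerIdeal K (faceStar Δ {a, b}) := by
  rw [mem_stanleyReisnerIdeal_iff hΔ] at h
  rw [mem_stanleyReisnerIdeal_iff (isLowerSet_faceStar hΔ _)]
  intro F hF
  have hres := h _ hF
  rw [map_sub, map_mul, restrictVars_X_of_mem (by simp),
    restrictVars_symmMap_of_mem hab (by simp) (by simp),
    restrictVars_symmMap_of_mem hab (by simp) (by simp), sub_eq_zero] at hres
  rw [← restrictVars_restrictVars_of_subset Finset.subset_union_left,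
    eq_zero_of_X_mul_symmMap_eq_symmMap hab hres, map_zero]

theorem exists_X_mul_symmMap_prod_X_sub_mem (hab : a ≠ b) {F : Finset σ} (ha : a ∉ F) (hb : b ∉ F)
    (hF : insert a F ∉ Δ ∨ insert b F ∉ Δ) :
    ∃ f, X a * symmMap K a b (∏ c ∈ F, X c) - symmMap K a b f ∈ stanleyReisnerIdeal K Δ := by
  rcases hF with hF | hF
  · refine ⟨0, ?_⟩
    rw [symmMap_prod_X ha hb, map_zero, sub_zero, ← Finset.prod_insert ha]
    exact prod_X_mem_stanleyReisnerIdeal hF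
  · refine ⟨X b * ∏ c ∈ F, X c, ?_⟩
    rw [map_mul, symmMap_prod_X ha hb, symmMap_X_right hab, ← sub_mul, sub_add_cancel_left, neg_mul,
      ← Finset.prod_insert hb]
    exact neg_mem (prod_X_mem_stanleyReisnerIdeal hF)

theorem insert_notMem_or_insert_notMem (hlc : faceLink Δ {a} ∩ faceLink Δ {b} ⊆ faceLink Δ {a, b})
    {F : Finset σ} (ha : a ∉ F) (hb : b ∉ F) (hF : F ∪ {a, b} ∉ Δ) :
    insert a F ∉ Δ ∨ insert b F ∉ Δ := by
  by_contra! h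
  refine hF (hlc ⟨⟨?_, ?_⟩, ?_, ?_⟩).2
  · rwa [Finset.disjoint_singleton_right]
  · rw [Finset.union_singleton]; exact h.1
  · rwa [Finset.disjoint_singleton_right]
  · rw [Finset.union_singleton]; exact h.2

theorem exists_X_mul_symmMap_sub_mem (hab : a ≠ b)
    (hlc : faceLink Δ {a} ∩ faceLink Δ {b} ⊆ faceLink Δ {a, b}) {g : MvPolynomial σ K}
    (hg : g ∈ stanleyReisnerIdeal K (faceStar Δ {a, b})) :
    ∃ f, X a * symmMap K a b g - symmMap K a b f ∈ stanleyReisnerIdeal K Δ := by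
  induction hg using Submodule.span_induction with
  | zero => exact ⟨0, by simp⟩
  | add p q _ _ hp hq =>
    obtain ⟨f, hf⟩ := hp
    obtain ⟨f', hf'⟩ := hq
    refine ⟨f + f', ?_⟩
    simpa only [map_add, mul_add, add_sub_add_comm] using add_mem hf hf'
  | smul r p _ hp =>
    obtain ⟨f, hf⟩ := hp
    refine ⟨r * f, ?_⟩
    simpa only [smul_eq_mul, map_mul, mul_sub, mul_left_comm] using
      Ideal.mul_mem_left _ (symmMap K a b r) hf
  | mem _ h =>
    obtain ⟨F, hF, rfl⟩ := h
    have hsdiff : F \ {a, b} ∪ {a, b} ∉ Δ := by rwa [Finset.sdiff_union_self_eq_union]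
    obtain ⟨f, hf⟩ := exists_X_mul_symmMap_prod_X_sub_mem (K := K) hab (by simp) (by simp)
      (insert_notMem_or_insert_notMem hlc (by simp) (by simp) hsdiff)
    refine ⟨(∏ c ∈ F ∩ {a, b}, X c) * f, ?_⟩
    beta_reduce
    rw [← Finset.prod_inter_mul_prod_sdiff F {a, b} X]
    simpa only [map_mul, mul_sub, mul_left_comm] using
      Ideal.mul_mem_left _ (symmMap K a b (∏ c ∈ F ∩ {a, b}, X c)) hf

theorem depthGE_stanleyReisner_of_edgeContraction [IsDomain K] [IsNoetherianRing K] [Finite σ]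
    (hΔ : IsLowerSet Δ) (hab : a ≠ b) (hE : {a, b} ∈ Δ)
    (hlc : faceLink Δ {a} ∩ faceLink Δ {b} ⊆ faceLink Δ {a, b}) {d : ℕ}
    (hcontr : DepthGE (idealOfVars σ K)
      (MvPolynomial σ K ⧸ stanleyReisnerIdeal K (edgeContraction Δ a b)) (d + 2))
    (hlink : DepthGE (idealOfVars σ K)
      (MvPolynomial σ K ⧸ stanleyReisnerIdeal K (faceLink Δ {a, b})) d) :
    DepthGE (idealOfVars σ K) (MvPolynomial σ K ⧸ stanleyReisnerIdeal K Δ) (d + 2) := by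
  have hstar := depthGE_stanleyReisner_faceStar hΔ hab hE hlink
  have hcomap : DepthGE (idealOfVars σ K)
      (MvPolynomial σ K ⧸ (stanleyReisnerIdeal K Δ).comap (symmMap K a b).toRingHom) (d + 2) := by
    refine .quotient_of_colon (X a) ?_ ?_
    · rwa [colon_comap_symmMap_stanleyReisnerIdeal hΔ hab]
    · rwa [← comap_symmMap_stanleyReisnerIdeal_sup_span_X hΔ hab] at hcontr
  exact depthGE_quotient_of_quadratic (symmMap K a b).toRingHom
    (exists_eq_symmMap_add_X_mul_symmMap hab)
    (stanleyReisnerIdeal_le_idealOfVars (hΔ (Finset.empty_subset _) hE)) (idealOfVars_ne_top σ K)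
    (map_symmMap_idealOfVars_le hab)
    (fun g => ⟨exists_X_mul_symmMap_sub_mem hab hlc,
      fun ⟨f, hf⟩ => mem_stanleyReisnerIdeal_faceStar_of_X_mul_symmMap_sub_mem hΔ hab hf⟩)
    hcomap hstar

end EdgeContraction

section IndexComplex

open MvPolynomial

/-- The vertices of `[n]` as labels of the variables: `a : Fin n` stands for the vertex `a + 1`. -/
def vertex (n : ℕ) : Fin n ↪ ℕ :=
  ⟨fun a => a + 1, fun _ _ h => Fin.ext (Nat.succ_injective h)⟩

/-- A simplicial complex on `[n]` viewed as a complex with vertices indexed by `Fin n`. -/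
def indexComplex (n : ℕ) (Γ : Set (Finset ℕ)) : Set (Finset (Fin n)) :=
  {F | F.map (vertex n) ∈ Γ}

variable {n : ℕ} {Γ : Set (Finset ℕ)}

theorem exists_vertex_eq {x : ℕ} (hx : x ∈ Finset.Icc 1 n) : ∃ a, vertex n a = x := by
  obtain ⟨h1, hn⟩ := Finset.mem_Icc.mp hx
  exact ⟨⟨x - 1, by lia⟩, Nat.sub_add_cancel h1⟩

theorem vertex_mem_Icc (a : Fin n) : vertex n a ∈ Finset.Icc 1 n :=
  Finset.mem_Icc.mpr ⟨Nat.succ_pos a, a.isLt⟩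

theorem map_vertex_univ : Finset.univ.map (vertex n) = Finset.Icc 1 n := by
  ext x
  rw [Finset.mem_map]
  refine ⟨?_, fun hx => (exists_vertex_eq hx).imp fun a ha => ⟨Finset.mem_univ a, ha⟩⟩
  rintro ⟨a, -, rfl⟩
  exact vertex_mem_Icc a

theorem exists_map_vertex_eq {F : Finset ℕ} (hF : F ⊆ Finset.Icc 1 n) :
    ∃ G : Finset (Fin n), G.map (vertex n) = F := by
  rw [← map_vertex_univ] at hF
  obtain ⟨G, -, rfl⟩ := Finset.subset_map_iff.mp hF
  exact ⟨G, rfl⟩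

theorem faceMonomial_map_vertex (K : Type*) [CommRing K] (F : Finset (Fin n)) :
    faceMonomial K n (F.map (vertex n)) = ∏ a ∈ F, X a := by
  refine Finset.prod_congr ?_ fun _ _ => rfl
  ext a
  rw [Finset.mem_filter, and_iff_right (Finset.mem_univ a)]
  exact Finset.mem_map' (vertex n)

theorem srIdeal_eq_stanleyReisnerIdeal (K : Type*) [CommRing K] :
    srIdeal K n Γ = stanleyReisnerIdeal K (indexComplex n Γ) := by
  refine congrArg Ideal.span (Set.Subset.antisymm ?_ ?_)
  · rintro _ ⟨F, hF, hFΓ, rfl⟩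
    obtain ⟨G, rfl⟩ := exists_map_vertex_eq hF
    exact ⟨G, hFΓ, (faceMonomial_map_vertex K G).symm⟩
  · rintro _ ⟨G, hG, rfl⟩
    refine ⟨G.map (vertex n), ?_, hG, (faceMonomial_map_vertex K G).symm⟩
    rw [← map_vertex_univ]
    exact Finset.map_subset_map.mpr (Finset.subset_univ G)

theorem isLowerSet_indexComplex (hΓ : IsLowerSet Γ) : IsLowerSet (indexComplex n Γ) :=
  fun _ _ h hF => hΓ (Finset.map_subset_map.mpr h) hF

theorem isLowerSet_linkOf (hΓ : IsLowerSet Γ) (E : Finset ℕ) : IsLowerSet (linkOf Γ E) :=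
  fun _ _ h hF => ⟨hF.1.mono_left h, hΓ (Finset.union_subset_union_left h) hF.2⟩

theorem subset_of_mem_linkOf {V : Finset ℕ} (hV : ∀ F ∈ Γ, F ⊆ V) {E F : Finset ℕ}
    (hF : F ∈ linkOf Γ E) : F ⊆ V :=
  Finset.subset_union_left.trans (hV _ hF.2)

theorem empty_mem_linkOf {E : Finset ℕ} (hE : E ∈ Γ) : ∅ ∈ linkOf Γ E :=
  ⟨Finset.disjoint_empty_left E, by rwa [Finset.empty_union]⟩

theorem indexComplex_linkOf (E : Finset (Fin n)) :
    indexComplex n (linkOf Γ (E.map (vertex n))) = faceLink (indexComplex n Γ) E := by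
  ext F
  simp only [indexComplex, linkOf, faceLink, Set.mem_ofPred_eq, Finset.disjoint_map,
    Finset.map_union]

theorem contraction_eq_edgeContraction (hΓ : IsLowerSet Γ) {i j : ℕ} (hij : i ≠ j) :
    contraction Γ i j = edgeContraction Γ i j := by
  ext G
  constructor
  · rintro (⟨hG, hi⟩ | ⟨F, hF, hi, rfl⟩)
    · exact ⟨hi, .inl hG⟩
    · exact ⟨by simp [hij], .inr (hΓ (by grind) hF)⟩
  · rintro ⟨hi, hG | hG⟩
    · exact .inl ⟨hG, hi⟩
    by_cases hj : j ∈ G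
    · exact .inr ⟨_, hG, Finset.mem_insert_self _ _, by grind⟩
    · exact .inl ⟨hΓ (by grind) hG, hi⟩

theorem indexComplex_edgeContraction (a b : Fin n) :
    indexComplex n (edgeContraction Γ (vertex n a) (vertex n b)) =
      edgeContraction (indexComplex n Γ) a b := by
  ext F
  simp only [indexComplex, edgeContraction, Set.mem_ofPred_eq, Finset.mem_map', Finset.map_insert,
    Finset.map_erase]

theorem faceLink_inter_subset_of_linkCondition {a b : Fin n}
    (hlc : LinkCondition Γ (vertex n a) (vertex n b)) :
    faceLink (indexComplex n Γ) {a} ∩ faceLink (indexComplex n Γ) {b} ⊆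
      faceLink (indexComplex n Γ) {a, b} := by
  simp only [← indexComplex_linkOf, Finset.map_singleton, Finset.map_insert]
  exact fun F hF => hlc.subset hF

theorem isGreatest_sdim {V : Finset ℕ} (hV : ∀ F ∈ Γ, F ⊆ V) (hne : Γ.Nonempty) :
    IsGreatest ((fun F : Finset ℕ => (F.card : ℤ) - 1) '' Γ) (sdim Γ) := by
  have hfin : Γ.Finite :=
    V.powerset.finite_toSet.subset fun F hF => Finset.mem_powerset.mpr (hV F hF)
  exact ⟨(hne.image _).csSup_mem (hfin.image _),
    fun _ => le_csSup (hfin.image _).bddAbove⟩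

theorem neg_one_le_sdim {V : Finset ℕ} (hV : ∀ F ∈ Γ, F ⊆ V) (h₀ : ∅ ∈ Γ) : -1 ≤ sdim Γ :=
  (isGreatest_sdim hV ⟨∅, h₀⟩).2 ⟨∅, h₀, by simp⟩

theorem ringKrullDim_stanleyReisner_indexComplex (K : Type*) [Field K] {d : ℕ}
    (hV : ∀ F ∈ Γ, F ⊆ Finset.Icc 1 n) (hΓ : IsLowerSet Γ) (hne : Γ.Nonempty)
    (hd : sdim Γ = (d : ℤ) - 1) :
    ringKrullDim (MvPolynomial (Fin n) K ⧸ stanleyReisnerIdeal K (indexComplex n Γ)) = d := by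
  obtain ⟨⟨F, hF, hFd⟩, hmax⟩ := isGreatest_sdim hV hne
  obtain ⟨G, rfl⟩ := exists_map_vertex_eq (hV F hF)
  obtain rfl : G.card = d := by
    simp only [Finset.card_map] at hFd
    lia
  refine le_antisymm (ringKrullDim_stanleyReisner_le fun H hH => ?_)
    (card_le_ringKrullDim_stanleyReisner (isLowerSet_indexComplex hΓ) hF)
  have := hmax ⟨_, hH, rfl⟩
  simp only [Finset.card_map] at this
  lia

theorem complexCM_iff_depthGE {K : Type*} [Field K] [Infinite K] {d : ℕ}
    (hV : ∀ F ∈ Γ, F ⊆ Finset.Icc 1 n) (hΓ : IsLowerSet Γ) (h₀ : ∅ ∈ Γ)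
    (hd : sdim Γ = (d : ℤ) - 1) :
    ComplexCM K n Γ ↔ DepthGE (idealOfVars (Fin n) K)
      (MvPolynomial (Fin n) K ⧸ stanleyReisnerIdeal K (indexComplex n Γ)) d := by
  rw [ComplexCM, srIdeal_eq_stanleyReisnerIdeal]
  refine isCMIdeal_iff_depthGE (stanleyReisnerIdeal_le_idealOfVars ?_)
    (ringKrullDim_stanleyReisner_indexComplex K hV hΓ ⟨∅, h₀⟩ hd)
  rwa [indexComplex, Set.mem_ofPred_eq, Finset.map_empty]

theorem LinkCondition.pair_mem {i j : ℕ} (hlc : LinkCondition Γ i j) (hi : {i} ∈ Γ)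
    (hj : {j} ∈ Γ) : {i, j} ∈ Γ := by
  have hlink : ∅ ∈ linkOf Γ {i, j} := hlc.subset ⟨empty_mem_linkOf hi, empty_mem_linkOf hj⟩
  rw [← Finset.empty_union {i, j}]
  exact hlink.2

theorem subset_of_mem_edgeContraction {V : Finset ℕ} (hV : ∀ F ∈ Γ, F ⊆ V) {i j : ℕ} (hj : j ∈ V)
    {F : Finset ℕ} (hF : F ∈ edgeContraction Γ i j) : F ⊆ V := by
  rcases hF.2 with h | h
  · exact hV F h
  · exact (Finset.insert_erase_subset j F).trans
      (Finset.insert_subset hj ((Finset.subset_insert i _).trans (hV _ h)))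

theorem complexCM_linkOf_iff_depthGE {K : Type*} [Field K] [Infinite K] {d : ℕ}
    (hV : ∀ F ∈ Γ, F ⊆ Finset.Icc 1 n) (hΓ : IsLowerSet Γ) {E : Finset (Fin n)}
    (hE : E ∈ indexComplex n Γ) (hd : sdim (linkOf Γ (E.map (vertex n))) = (d : ℤ) - 1) :
    ComplexCM K n (linkOf Γ (E.map (vertex n))) ↔ DepthGE (idealOfVars (Fin n) K)
      (MvPolynomial (Fin n) K ⧸ stanleyReisnerIdeal K (faceLink (indexComplex n Γ) E)) d := by
  rw [complexCM_iff_depthGE (fun F => subset_of_mem_linkOf hV) (isLowerSet_linkOf hΓ _)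
    (empty_mem_linkOf hE) hd, indexComplex_linkOf]

theorem complexCM_contraction_iff_depthGE {K : Type*} [Field K] [Infinite K] {d : ℕ}
    (hV : ∀ F ∈ Γ, F ⊆ Finset.Icc 1 n) (hΓ : IsLowerSet Γ) (h₀ : ∅ ∈ Γ) {a b : Fin n}
    (hab : a ≠ b) (hd : sdim (contraction Γ (vertex n a) (vertex n b)) = (d : ℤ) - 1) :
    ComplexCM K n (contraction Γ (vertex n a) (vertex n b)) ↔ DepthGE (idealOfVars (Fin n) K)
      (MvPolynomial (Fin n) K ⧸
        stanleyReisnerIdeal K (edgeContraction (indexComplex n Γ) a b)) d := by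
  rw [contraction_eq_edgeContraction hΓ ((vertex n).injective.ne hab)] at hd ⊢
  rw [complexCM_iff_depthGE (fun F => subset_of_mem_edgeContraction hV (vertex_mem_Icc b))
    (isLowerSet_edgeContraction hΓ) ⟨Finset.notMem_empty _, .inl h₀⟩ hd,
    indexComplex_edgeContraction]

end IndexComplex

theorem stmt9_general {K : Type*} [Field K] [Infinite K] {n d i j : ℕ} (hij : i ≠ j)
    {Γ : Set (Finset ℕ)} (hV : ∀ F ∈ Γ, F ⊆ Finset.Icc 1 n) (hΓ : IsLowerSet Γ)
    (hE : {i, j} ∈ Γ) (hdim : sdim Γ = (d : ℤ) - 1) (hlc : LinkCondition Γ i j)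
    (hcd : sdim (contraction Γ i j) = (d : ℤ) - 1) (hld : sdim (linkOf Γ {i, j}) = (d : ℤ) - 3)
    (h1 : ComplexCM K n (contraction Γ i j)) (h2 : ComplexCM K n (linkOf Γ {i, j})) :
    ComplexCM K n Γ := by
  obtain ⟨a, rfl⟩ := exists_vertex_eq (hV _ hE (by simp) : i ∈ _)
  obtain ⟨b, rfl⟩ := exists_vertex_eq (hV _ hE (by simp) : j ∈ _)
  have hab : a ≠ b := fun h => hij (congrArg (vertex n) h)
  have hmap : ({a, b} : Finset (Fin n)).map (vertex n) = {vertex n a, vertex n b} := by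
    rw [Finset.map_insert, Finset.map_singleton]
  rw [← hmap] at hE hld h2
  have h₀ : ∅ ∈ Γ := hΓ (Finset.empty_subset _) hE
  have hlink := neg_one_le_sdim (fun F => subset_of_mem_linkOf hV) (empty_mem_linkOf hE)
  obtain ⟨e, rfl⟩ : ∃ e, d = e + 2 := Nat.exists_eq_add_of_le' (by lia)
  rw [complexCM_contraction_iff_depthGE hV hΓ h₀ hab hcd] at h1
  rw [complexCM_linkOf_iff_depthGE (d := e) hV hΓ hE (by lia)] at h2
  rw [complexCM_iff_depthGE hV hΓ h₀ hdim]
  exact depthGE_stanleyReisner_of_edgeContraction (isLowerSet_indexComplex hΓ) hab hE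
    (faceLink_inter_subset_of_linkCondition hlc) h1 h2

/-- Remark 3.3 / 4.6. Let `Γ` be a `(d-1)`-dimensional complex on `[n]`
satisfying the Link condition w.r.t. `{i,j}`, with `dim C_Γ(ij) = d-1` and
`dim lk_Γ({i,j}) = d-3`. If `C_Γ(ij)` and `lk_Γ({i,j})` are Cohen–Macaulay over an
infinite field `K`, then so is `Γ`. -/
theorem stmt9 (K : Type) [Field K] (hK : Infinite K)
    (n d i j : ℕ) (hi : 1 ≤ i) (hij : i < j) (hj : j ≤ n)
    (Γ : Set (Finset ℕ)) (hΓ : SimplicialComplexOn (Finset.Icc 1 n) Γ)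
    (hdim : sdim Γ = (d : ℤ) - 1)
    (hlc : LinkCondition Γ i j)
    (hcd : sdim (contraction Γ i j) = (d : ℤ) - 1)
    (hld : sdim (linkOf Γ {i, j}) = (d : ℤ) - 3)
    (h1 : ComplexCM K n (contraction Γ i j))
    (h2 : ComplexCM K n (linkOf Γ {i, j})) :
    ComplexCM K n Γ := by
  exact stmt9_general hij.ne hΓ.1 (fun F G h hF => hΓ.2.2 F hF G h)
    (hlc.pair_mem (hΓ.2.1 i (Finset.mem_Icc.mpr ⟨hi, hij.le.trans hj⟩))
      (hΓ.2.1 j (Finset.mem_Icc.mpr ⟨hi.trans hij.le, hj⟩))) hdim hlc hcd hld h1 h2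
end
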